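/- arXiv:1008.2449 — 6 statements merged into one kernel-verified Lean document; each statement's English description precedes it below -/
import Mathlib

section
/- Let X be a locally compact Hausdorff space and let ζ be a quasi-integral on X. Then the induced set function τ_ζ is a topological measure on X; that is, τ_ζ is additive on disjoint pairs A, A' ∈ 𝒜(X) with A ∪ A' ∈ 𝒜(X), monotone with respect to inclusion on 𝒜(X), outer regular on compact sets, and inner regular on open sets with compact closure. -/
/-!
Besides monotonicity, homogeneity and the Lipschitz estimate, the argument rests on two cases in
which quasi-linearity makes `ζ` additive.

* If `f, g ≥ 0` and `f * g = 0`, then `f` and `g` are the positive and negative parts of `f - g`,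
  so `ζ (f + g) = ζ f + ζ g` (`zeta_add_of_mul_eq_zero`). This gives additivity of `τ_ζ` on two
  disjoint compact sets (after multiplying by Urysohn functions) and on two disjoint open sets.
* If `f ≤ 1`, `g ≥ 0` and `f = 1` wherever `g ≠ 0`, then `f` and `g` are functions of `f + g`
  (truncation and excess at height `1`), so `ζ f = ζ g + ζ (f - g)` (`zeta_sub`).
  This yields `τ_ζ(U) ≤ τ_ζ(K) + τ_ζ(U \ K)` for `K` compact in `U` open.
* Inner regularity replaces `f ≤ 1_O` by `(f - ε)⁺`, which is dominated by the indicator of the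
  compact set `{f ≥ ε} ⊆ O`; outer regularity replaces `f ≥ 1_K` by `s f` with `s > 1`, which
  dominates the indicator of the open set `{s f > 1} ⊇ K`.

Inner regularity and additivity on compact sets give the reverse inequality
`τ_ζ(K) + τ_ζ(U \ K) ≤ τ_ζ(U)`. Finally, if `C = K ∪ O` is compact with `K` compact, `O` open and
the two disjoint, take an open `U ⊇ K` with `τ_ζ(U)` close to `τ_ζ(K)` and put `L = C \ U`, a
compact subset of `O`. The open set `U ∪ O` is the disjoint union of `U` and `L`, so
`τ_ζ(C) ≤ τ_ζ(U ∪ O) = τ_ζ(L) + τ_ζ(U) ≤ τ_ζ(O) + τ_ζ(U)`.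
-/

open Set Topology
open scoped CompactlySupported

noncomputable section

/-- The family `𝒜(X)` of admissible sets: compact sets together with
open sets with compact closure. -/
def Admissible (X : Type*) [TopologicalSpace X] : Set (Set X) :=
  {A | IsCompact A ∨ (IsOpen A ∧ IsCompact (closure A))}

/-- A quasi-integral on `X`: a monotone, locally Lipschitz (w.r.t. the uniform norm,
on functions with support in a fixed compact set) functional on `C_c(X, ℝ)` which is
linear on every subspace of the form `{φ ∘ f | φ ∈ C(ℝ), φ 0 = 0}`. -/
structure QuasiIntegral (X : Type*) [TopologicalSpace X] where
  toFun : C_c(X, ℝ) → ℝ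
  mono' : ∀ f g : C_c(X, ℝ), (∀ x, f x ≤ g x) → toFun f ≤ toFun g
  lipschitz' : ∀ K : Set X, IsCompact K → ∃ N : ℝ, 0 ≤ N ∧
    ∀ f g : C_c(X, ℝ), tsupport ⇑f ⊆ K → tsupport ⇑g ⊆ K →
      |toFun f - toFun g| ≤ N * ⨆ x, |f x - g x|
  quasilin_add' : ∀ (f : C_c(X, ℝ)) (φ ψ : ℝ → ℝ), Continuous φ → Continuous ψ →
    φ 0 = 0 → ψ 0 = 0 → ∀ gφ gψ gs : C_c(X, ℝ),
    (∀ x, gφ x = φ (f x)) → (∀ x, gψ x = ψ (f x)) →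
    (∀ x, gs x = φ (f x) + ψ (f x)) → toFun gs = toFun gφ + toFun gψ
  quasilin_smul' : ∀ (f : C_c(X, ℝ)) (φ : ℝ → ℝ), Continuous φ → φ 0 = 0 →
    ∀ (c : ℝ) (gφ gc : C_c(X, ℝ)),
    (∀ x, gφ x = φ (f x)) → (∀ x, gc x = c * φ (f x)) → toFun gc = c * toFun gφ

/-- A topological measure on `X` (normalized to vanish on non-admissible sets):
a nonnegative, additive, monotone, regular set function on `𝒜(X)`. -/
structure TopMeasure (X : Type*) [TopologicalSpace X] where
  toFun : Set X → ℝ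
  zero_of_not_mem' : ∀ A : Set X, A ∉ Admissible X → toFun A = 0
  nonneg' : ∀ A : Set X, 0 ≤ toFun A
  additive' : ∀ A A' : Set X, A ∈ Admissible X → A' ∈ Admissible X →
    A ∪ A' ∈ Admissible X → Disjoint A A' → toFun (A ∪ A') = toFun A + toFun A'
  mono' : ∀ A A' : Set X, A ∈ Admissible X → A' ∈ Admissible X → A ⊆ A' →
    toFun A ≤ toFun A'
  outer_reg' : ∀ K : Set X, IsCompact K →
    toFun K = sInf (toFun '' {O : Set X | IsOpen O ∧ IsCompact (closure O) ∧ K ⊆ O})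
  inner_reg' : ∀ O : Set X, IsOpen O → IsCompact (closure O) →
    toFun O = sSup (toFun '' {K : Set X | IsCompact K ∧ K ⊆ O})

variable {X : Type*} [TopologicalSpace X]

/-- `τ_ζ(K) = inf {ζ(f) | f ∈ C_c(X), f ≥ 1_K}`, for `K` compact. -/
def tauCompact (ζ : QuasiIntegral X) (K : Set X) : ℝ :=
  sInf (ζ.toFun '' {f : C_c(X, ℝ) | ∀ x, K.indicator (fun _ => (1 : ℝ)) x ≤ f x})

/-- `τ_ζ(O) = sup {ζ(f) | f ∈ C_c(X), f ≤ 1_O}`, for `O` open with compact closure. -/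
def tauOpen (ζ : QuasiIntegral X) (O : Set X) : ℝ :=
  sSup (ζ.toFun '' {f : C_c(X, ℝ) | ∀ x, f x ≤ O.indicator (fun _ => (1 : ℝ)) x})

open scoped Classical in
/-- The induced set function `τ_ζ` of a quasi-integral `ζ`. -/
def inducedSetFun (ζ : QuasiIntegral X) (A : Set X) : ℝ :=
  if IsCompact A then tauCompact ζ A
  else if IsOpen A ∧ IsCompact (closure A) then tauOpen ζ A
  else 0

namespace InducedTM

lemma exists_comp₂ (f g : C_c(X, ℝ)) (G : ℝ → ℝ → ℝ)
    (hG : Continuous fun p : ℝ × ℝ => G p.1 p.2) (h0 : G 0 0 = 0) :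
    ∃ h : C_c(X, ℝ), ∀ x, h x = G (f x) (g x) :=
  ⟨⟨⟨fun x => G (f x) (g x), hG.comp (f.continuous.prodMk g.continuous)⟩,
    f.hasCompactSupport.comp₂_left g.hasCompactSupport h0⟩, fun _ => rfl⟩

lemma indicator_le_iff {K : Set X} {f : C_c(X, ℝ)} :
    (∀ x, K.indicator (fun _ => (1 : ℝ)) x ≤ f x) ↔ (∀ x, 0 ≤ f x) ∧ ∀ x ∈ K, 1 ≤ f x := by
  constructor
  · intro h
    refine ⟨fun x => (Set.indicator_nonneg (fun _ _ => zero_le_one) x).trans (h x),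
      fun x hx => ?_⟩
    simpa [hx] using h x
  · rintro ⟨h0, h1⟩ x
    by_cases hx : x ∈ K
    · simpa [hx] using h1 x hx
    · simpa [hx] using h0 x

lemma le_indicator_iff {O : Set X} {f : C_c(X, ℝ)} :
    (∀ x, f x ≤ O.indicator (fun _ => (1 : ℝ)) x) ↔ (∀ x, f x ≤ 1) ∧ ∀ x ∉ O, f x ≤ 0 := by
  constructor
  · intro h
    refine ⟨fun x => (h x).trans (Set.indicator_le_self' (fun _ _ => zero_le_one) x),
      fun x hx => ?_⟩
    simpa [hx] using h x
  · rintro ⟨h0, h1⟩ x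
    by_cases hx : x ∈ O
    · simpa [hx] using h0 x
    · simpa [hx] using h1 x hx

/-! ### Consequences of quasi-linearity -/

lemma zeta_zero (ζ : QuasiIntegral X) : ζ.toFun 0 = 0 := by
  have := ζ.quasilin_smul' 0 id continuous_id rfl 0 0 0 (by simp) (by simp)
  simpa using this

lemma zeta_nonneg (ζ : QuasiIntegral X) {f : C_c(X, ℝ)} (hf : ∀ x, 0 ≤ f x) :
    0 ≤ ζ.toFun f := by
  rw [← zeta_zero ζ]
  exact ζ.mono' _ _ (by simpa using hf)

/-- `f` and `g` are the positive and negative parts of the single function `f - g`. -/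
lemma zeta_add_of_mul_eq_zero (ζ : QuasiIntegral X) {f g h : C_c(X, ℝ)} (hf : ∀ x, 0 ≤ f x)
    (hg : ∀ x, 0 ≤ g x) (hfg : ∀ x, f x = 0 ∨ g x = 0) (hh : ∀ x, h x = f x + g x) :
    ζ.toFun h = ζ.toFun f + ζ.toFun g := by
  have hφ : ∀ x, f x = max ((f - g) x) 0 := fun x => by
    have h1 := hf x
    have h2 := hg x
    rcases hfg x with h | h <;> simp [h, h1, h2]
  have hψ : ∀ x, g x = max (-(f - g) x) 0 := fun x => by
    have h1 := hf x
    have h2 := hg x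
    rcases hfg x with h | h <;> simp [h, h1, h2]
  refine ζ.quasilin_add' (f - g) (fun t => max t 0) (fun t => max (-t) 0) (by fun_prop)
    (by fun_prop) (by simp) (by simp) f g h hφ hψ fun x => ?_
  rw [← hφ, ← hψ, hh]

/-- `g` and `f - g` are both functions of `f + g`: the excess over height `1`, and the
truncation at height `1` minus that excess. -/
lemma zeta_sub (ζ : QuasiIntegral X) {f g : C_c(X, ℝ)} (hf : ∀ x, f x ≤ 1)
    (hg : ∀ x, 0 ≤ g x) (hfg : ∀ x, f x = 1 ∨ g x = 0) :
    ζ.toFun f = ζ.toFun g + ζ.toFun (f - g) := by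
  have hφ : ∀ x, g x = max ((f + g) x - 1) 0 := fun x => by
    have h1 := hf x
    have h2 := hg x
    rcases hfg x with h | h <;> simp [h, h1, h2]
  have hψ : ∀ x, f x = min ((f + g) x) 1 := fun x => by
    have h1 := hf x
    have h2 := hg x
    rcases hfg x with h | h <;> simp [h, h1, h2]
  refine ζ.quasilin_add' (f + g) (fun t => max (t - 1) 0)
    (fun t => min t 1 - max (t - 1) 0) (by fun_prop)
    (by fun_prop) (by simp) (by simp) g (f - g) f hφ (fun x => ?_) fun x => ?_
  · rw [← hφ, ← hψ]; rfl
  · rw [← hφ, ← hψ]; ring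

lemma zeta_smul (ζ : QuasiIntegral X) (c : ℝ) (f : C_c(X, ℝ)) :
    ζ.toFun (c • f) = c * ζ.toFun f :=
  ζ.quasilin_smul' f id continuous_id rfl c f (c • f) (fun _ => rfl) fun _ => rfl

/-! ### Elementary bounds for the induced set function -/

lemma tauCompact_le (ζ : QuasiIntegral X) {K : Set X} {f : C_c(X, ℝ)} (h0 : ∀ x, 0 ≤ f x)
    (h1 : ∀ x ∈ K, 1 ≤ f x) : tauCompact ζ K ≤ ζ.toFun f := by
  refine csInf_le ⟨0, ?_⟩ ⟨f, indicator_le_iff.2 ⟨h0, h1⟩, rfl⟩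
  rintro _ ⟨g, hg, rfl⟩
  exact zeta_nonneg ζ (indicator_le_iff.1 hg).1

lemma tauCompact_nonneg (ζ : QuasiIntegral X) (K : Set X) : 0 ≤ tauCompact ζ K := by
  refine Real.sInf_nonneg ?_
  rintro _ ⟨g, hg, rfl⟩
  exact zeta_nonneg ζ (indicator_le_iff.1 hg).1

/-- Only nonnegative competitors matter in the supremum, since `f` may be replaced by `f⁺`. -/
lemma tauOpen_le (ζ : QuasiIntegral X) {O : Set X} {a : ℝ}
    (h : ∀ f : C_c(X, ℝ), (∀ x, 0 ≤ f x) → (∀ x, f x ≤ 1) → (∀ x ∉ O, f x = 0) →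
      ζ.toFun f ≤ a) : tauOpen ζ O ≤ a := by
  refine csSup_le ⟨_, 0, le_indicator_iff.2 (by simp), rfl⟩ ?_
  rintro _ ⟨f, hf, rfl⟩
  obtain ⟨hf1, hf0⟩ := le_indicator_iff.1 hf
  obtain ⟨g, hg⟩ := exists_comp₂ f f (fun s _ => max s 0) (by fun_prop) (by simp)
  refine (ζ.mono' f g fun x => by simp [hg]).trans (h g (fun x => by simp [hg])
    (fun x => by simp [hg, hf1]) fun x hx => by simp [hg, hf0 x hx])

lemma inducedSetFun_compact (ζ : QuasiIntegral X) {K : Set X} (hK : IsCompact K) :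
    inducedSetFun ζ K = tauCompact ζ K := by
  simp [inducedSetFun, hK]

variable [T2Space X] [LocallyCompactSpace X]

lemma exists_urysohn {K U : Set X} (hK : IsCompact K) (hU : IsOpen U) (h : K ⊆ U) :
    ∃ u : C_c(X, ℝ), (∀ x, 0 ≤ u x) ∧ (∀ x, u x ≤ 1) ∧ (∀ x ∈ K, u x = 1) ∧
      ∀ x ∉ U, u x = 0 := by
  obtain ⟨u, h1, h0, hc, hI⟩ := exists_continuous_one_zero_of_isCompact hK hU.isClosed_compl
    (Set.disjoint_compl_right_iff_subset.2 h)
  exact ⟨⟨u, hc⟩, fun x => (hI x).1, fun x => (hI x).2, fun x hx => h1 hx, fun x hx => h0 hx⟩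

lemma le_tauCompact (ζ : QuasiIntegral X) {K : Set X} (hK : IsCompact K) {a : ℝ}
    (h : ∀ f : C_c(X, ℝ), (∀ x, 0 ≤ f x) → (∀ x ∈ K, 1 ≤ f x) → a ≤ ζ.toFun f) :
    a ≤ tauCompact ζ K := by
  obtain ⟨u, hu0, -, hu1, -⟩ := exists_urysohn hK isOpen_univ (subset_univ _)
  refine le_csInf ⟨_, u, indicator_le_iff.2 ⟨hu0, fun x hx => (hu1 x hx).ge⟩, rfl⟩ ?_
  rintro _ ⟨f, hf, rfl⟩
  exact h f (indicator_le_iff.1 hf).1 (indicator_le_iff.1 hf).2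

lemma le_tauOpen (ζ : QuasiIntegral X) {O : Set X} (hO : IsCompact (closure O))
    {f : C_c(X, ℝ)} (h1 : ∀ x, f x ≤ 1) (h0 : ∀ x ∉ O, f x ≤ 0) :
    ζ.toFun f ≤ tauOpen ζ O := by
  obtain ⟨u, hu0, -, hu1, -⟩ := exists_urysohn hO isOpen_univ (subset_univ _)
  refine le_csSup ⟨ζ.toFun u, ?_⟩ ⟨f, le_indicator_iff.2 ⟨h1, h0⟩, rfl⟩
  rintro _ ⟨g, hg, rfl⟩
  obtain ⟨hg1, hg0⟩ := le_indicator_iff.1 hg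
  refine ζ.mono' _ _ fun x => ?_
  by_cases hx : x ∈ O
  · rw [hu1 x (subset_closure hx)]; exact hg1 x
  · exact (hg0 x hx).trans (hu0 x)

lemma tauCompact_mono (ζ : QuasiIntegral X) {K L : Set X} (hL : IsCompact L) (h : K ⊆ L) :
    tauCompact ζ K ≤ tauCompact ζ L :=
  le_tauCompact ζ hL fun _ h0 h1 => tauCompact_le ζ h0 fun x hx => h1 x (h hx)

lemma tauOpen_mono (ζ : QuasiIntegral X) {O U : Set X} (hU : IsCompact (closure U))
    (h : O ⊆ U) : tauOpen ζ O ≤ tauOpen ζ U :=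
  tauOpen_le ζ fun _ _ h1 hf => le_tauOpen ζ hU h1 fun x hx => (hf x fun hx' => hx (h hx')).le

lemma tauCompact_le_tauOpen (ζ : QuasiIntegral X) {K O : Set X} (hK : IsCompact K)
    (hO : IsOpen O) (hO' : IsCompact (closure O)) (h : K ⊆ O) :
    tauCompact ζ K ≤ tauOpen ζ O := by
  obtain ⟨u, hu0, hu1, huK, huO⟩ := exists_urysohn hK hO h
  exact (tauCompact_le ζ hu0 fun x hx => (huK x hx).ge).trans
    (le_tauOpen ζ hO' hu1 fun x hx => (huO x hx).le)

lemma tauOpen_le_tauCompact (ζ : QuasiIntegral X) {K O : Set X} (hK : IsCompact K)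
    (h : O ⊆ K) : tauOpen ζ O ≤ tauCompact ζ K := by
  refine le_tauCompact ζ hK fun g hg0 hg1 => tauOpen_le ζ fun f _ hf1 hf0 => ζ.mono' _ _ ?_
  intro x
  by_cases hx : x ∈ O
  · exact (hf1 x).trans (hg1 x (h hx))
  · exact (hf0 x hx).le.trans (hg0 x)

/-- The two defining formulas agree on sets that are both compact and open. -/
lemma inducedSetFun_open (ζ : QuasiIntegral X) {O : Set X} (hO : IsOpen O)
    (hO' : IsCompact (closure O)) : inducedSetFun ζ O = tauOpen ζ O := by
  by_cases h : IsCompact O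
  · rw [inducedSetFun_compact ζ h]
    exact (tauCompact_le_tauOpen ζ h hO hO' subset_rfl).antisymm
      (tauOpen_le_tauCompact ζ h subset_rfl)
  · simp [inducedSetFun, h, hO, hO']

/-! ### Regularity -/

/-- Inner regularity, as a bound: `(f - ε)⁺` is dominated by the indicator of the compact set
`{f ≥ ε}`, and the Lipschitz estimate controls the change from `f` to `(f - ε)⁺`. -/
lemma tauOpen_le_of_compact (ζ : QuasiIntegral X) {O : Set X} {a : ℝ}
    (h : ∀ K : Set X, IsCompact K → K ⊆ O → tauCompact ζ K ≤ a) : tauOpen ζ O ≤ a := by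
  refine tauOpen_le ζ fun f hf0 hf1 hfO => ?_
  obtain ⟨N, hN0, hN⟩ := ζ.lipschitz' (tsupport f) f.hasCompactSupport
  have key : ∀ ε : ℝ, 0 < ε → ζ.toFun f ≤ a + N * ε := by
    intro ε hε
    obtain ⟨g, hg⟩ := exists_comp₂ f f (fun s _ => max (s - ε) 0) (by fun_prop)
      (by simp [hε.le])
    have hgs : tsupport g ⊆ tsupport f := by
      refine closure_mono fun x hx hfx => hx ?_
      rw [hg, hfx]; simp [hε.le]
    have hd : |ζ.toFun f - ζ.toFun g| ≤ N * ε := by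
      refine (hN f g subset_rfl hgs).trans (mul_le_mul_of_nonneg_left ?_ hN0)
      refine Real.iSup_le (fun x => ?_) hε.le
      rw [hg, abs_le]
      have := hf0 x
      rcases max_cases (f x - ε) 0 with ⟨h1, h2⟩ | ⟨h1, h2⟩ <;> rw [h1] <;>
        constructor <;> linarith
    have hK : IsCompact {x | ε ≤ f x} := by
      refine f.hasCompactSupport.of_isClosed_subset (isClosed_le continuous_const f.continuous)
        fun x hx => subset_tsupport _ ?_
      exact (hε.trans_le hx).ne'
    have hKO : {x | ε ≤ f x} ⊆ O := fun x hx => by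
      by_contra hxO
      have hx' : ε ≤ f x := hx
      rw [hfO x hxO] at hx'
      linarith
    have hgK : ζ.toFun g ≤ tauCompact ζ {x | ε ≤ f x} := by
      refine le_tauCompact ζ hK fun k hk0 hk1 => ζ.mono' _ _ fun x => ?_
      rw [hg]
      refine max_le ?_ (hk0 x)
      by_cases hx : ε ≤ f x
      · have := hk1 x hx
        have := hf1 x
        linarith
      · have := hk0 x
        linarith
    have := h _ hK hKO
    have := (abs_le.1 hd).2
    linarith
  refine le_of_forall_pos_le_add fun δ hδ => ?_
  refine (key (δ / (N + 1)) (by positivity)).trans ?_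
  gcongr
  rw [mul_div_assoc', div_le_iff₀ (by positivity)]
  nlinarith

/-- Outer regularity, as a bound: for `s > 1` the function `s f` dominates the indicator of the
open set `{s f > 1}`, which contains `K` as soon as `f ≥ 1` on `K`. -/
lemma le_tauCompact_of_open (ζ : QuasiIntegral X) {K : Set X} (hK : IsCompact K) {a : ℝ}
    (h : ∀ U : Set X, IsOpen U → IsCompact (closure U) → K ⊆ U → a ≤ tauOpen ζ U) :
    a ≤ tauCompact ζ K := by
  refine le_tauCompact ζ hK fun f hf0 hf1 => ?_
  have key : ∀ s : ℝ, 1 < s → a ≤ s * ζ.toFun f := by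
    intro s hs
    have hUo : IsOpen {x | 1 < s * f x} :=
      isOpen_lt continuous_const (continuous_const.mul f.continuous)
    have hUs : {x | 1 < s * f x} ⊆ tsupport f := fun x hx => subset_tsupport _ fun h0 => by
      have hx' : 1 < s * f x := hx
      rw [h0] at hx'
      linarith
    have hUc : IsCompact (closure {x | 1 < s * f x}) :=
      f.hasCompactSupport.of_isClosed_subset isClosed_closure
        (closure_minimal hUs (isClosed_tsupport _))
    refine (h _ hUo hUc fun x hx => ?_).trans ?_
    · have := hf1 x hx
      show 1 < s * f x
      nlinarith
    · rw [← zeta_smul]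
      refine tauOpen_le ζ fun g _ hg1 hgU => ζ.mono' _ _ fun x => ?_
      show g x ≤ s * f x
      by_cases hx : 1 < s * f x
      · exact (hg1 x).trans hx.le
      · rw [hgU x hx]
        exact mul_nonneg (by linarith) (hf0 x)
  have hz := zeta_nonneg ζ hf0
  refine le_of_forall_pos_le_add fun δ hδ => ?_
  have hp : 0 < δ / (ζ.toFun f + 1) := by positivity
  refine (key (1 + δ / (ζ.toFun f + 1)) (by linarith)).trans ?_
  rw [add_mul, one_mul]
  gcongr
  rw [div_mul_eq_mul_div, div_le_iff₀ (by positivity)]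
  nlinarith

/-! ### Additivity -/

lemma tauCompact_union (ζ : QuasiIntegral X) {K L : Set X} (hK : IsCompact K)
    (hL : IsCompact L) (hd : Disjoint K L) :
    tauCompact ζ (K ∪ L) = tauCompact ζ K + tauCompact ζ L := by
  obtain ⟨U, V, hU, hV, hKU, hLV, hUV⟩ := SeparatedNhds.of_isCompact_isCompact hK hL hd
  obtain ⟨u, hu0, hu1, huK, huU⟩ := exists_urysohn hK hU hKU
  obtain ⟨v, hv0, hv1, hvL, hvV⟩ := exists_urysohn hL hV hLV
  have huv : ∀ x, u x = 0 ∨ v x = 0 := fun x => by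
    by_cases hx : x ∈ U
    · exact Or.inr (hvV x (Set.disjoint_left.1 hUV hx))
    · exact Or.inl (huU x hx)
  have hadd : ∀ f g : C_c(X, ℝ), (∀ x, 0 ≤ f x) → (∀ x, 0 ≤ g x) →
      ζ.toFun (f * u + g * v) = ζ.toFun (f * u) + ζ.toFun (g * v) := fun f g hf hg =>
    zeta_add_of_mul_eq_zero ζ (fun x => mul_nonneg (hf x) (hu0 x))
      (fun x => mul_nonneg (hg x) (hv0 x))
      (fun x => (huv x).imp (fun h => by simp [h]) fun h => by simp [h]) fun _ => rfl
  apply le_antisymm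
  · rw [← sub_le_iff_le_add]
    refine le_tauCompact ζ hK fun f hf0 hf1 => ?_
    rw [sub_le_comm]
    refine le_tauCompact ζ hL fun g hg0 hg1 => ?_
    rw [sub_le_iff_le_add']
    have h1 : tauCompact ζ (K ∪ L) ≤ ζ.toFun (f * u + g * v) := by
      refine tauCompact_le ζ (fun x => add_nonneg (mul_nonneg (hf0 x) (hu0 x))
        (mul_nonneg (hg0 x) (hv0 x))) ?_
      rintro x (hx | hx) <;> show 1 ≤ f x * u x + g x * v x
      · rw [huK x hx]
        have := hf1 x hx
        have := mul_nonneg (hg0 x) (hv0 x)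
        linarith
      · rw [hvL x hx]
        have := hg1 x hx
        have := mul_nonneg (hf0 x) (hu0 x)
        linarith
    have h2 : ζ.toFun (f * u) ≤ ζ.toFun f :=
      ζ.mono' _ _ fun x => mul_le_of_le_one_right (hf0 x) (hu1 x)
    have h3 : ζ.toFun (g * v) ≤ ζ.toFun g :=
      ζ.mono' _ _ fun x => mul_le_of_le_one_right (hg0 x) (hv1 x)
    rw [hadd f g hf0 hg0] at h1
    linarith
  · refine le_tauCompact ζ (hK.union hL) fun f hf0 hf1 => ?_
    have h1 : tauCompact ζ K ≤ ζ.toFun (f * u) :=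
      tauCompact_le ζ (fun x => mul_nonneg (hf0 x) (hu0 x)) fun x hx => by
        show 1 ≤ f x * u x
        rw [huK x hx, mul_one]
        exact hf1 x (Or.inl hx)
    have h2 : tauCompact ζ L ≤ ζ.toFun (f * v) :=
      tauCompact_le ζ (fun x => mul_nonneg (hf0 x) (hv0 x)) fun x hx => by
        show 1 ≤ f x * v x
        rw [hvL x hx, mul_one]
        exact hf1 x (Or.inr hx)
    have h3 : ζ.toFun (f * u + f * v) ≤ ζ.toFun f := ζ.mono' _ _ fun x => by
      show f x * u x + f x * v x ≤ f x
      rcases huv x with h | h <;> rw [h] <;> nlinarith [hf0 x, hu1 x, hv1 x]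
    rw [hadd f f hf0 hf0] at h3
    linarith

lemma tauOpen_union (ζ : QuasiIntegral X) {U V : Set X} (hU : IsOpen U) (hV : IsOpen V)
    (hU' : IsCompact (closure U)) (hV' : IsCompact (closure V)) (hd : Disjoint U V) :
    tauOpen ζ (U ∪ V) = tauOpen ζ U + tauOpen ζ V := by
  have hc : IsCompact (closure (U ∪ V)) := by rw [closure_union]; exact hU'.union hV'
  apply le_antisymm
  · refine tauOpen_le ζ fun f hf0 hf1 hfO => ?_
    -- A boundary point of one of two disjoint open sets lies in neither of them.
    have restrict : ∀ A B : Set X, IsOpen A → IsOpen B → Disjoint A B →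
        (∀ x ∉ A ∪ B, f x = 0) → ∃ g : C_c(X, ℝ), ∀ x, g x = A.indicator f x := by
      intro A B hA hB hAB hf
      refine ⟨⟨⟨A.indicator f, continuous_indicator (fun x hx => hf x ?_)
        f.continuous.continuousOn⟩, f.hasCompactSupport.mono ?_⟩, fun _ => rfl⟩
      · rw [hA.frontier_eq] at hx
        rintro (h | h)
        · exact hx.2 h
        · exact Set.disjoint_left.1 (hAB.closure_left hB) hx.1 h
      · exact fun x hx hfx => hx (by simp [hfx])
    obtain ⟨g, hg⟩ := restrict U V hU hV hd hfO
    obtain ⟨h, hh⟩ := restrict V U hV hU hd.symm (by rwa [union_comm])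
    have hg0 : ∀ x, 0 ≤ g x := fun x => by
      rw [hg]; exact Set.indicator_nonneg (fun x _ => hf0 x) x
    have hh0 : ∀ x, 0 ≤ h x := fun x => by
      rw [hh]; exact Set.indicator_nonneg (fun x _ => hf0 x) x
    rw [zeta_add_of_mul_eq_zero ζ (f := g) (g := h) hg0 hh0]
    · refine add_le_add (le_tauOpen ζ hU' (fun x => ?_) fun x hx => ?_)
        (le_tauOpen ζ hV' (fun x => ?_) fun x hx => ?_)
      · rw [hg]; exact (Set.indicator_le_self' (fun _ _ => hf0 _) x).trans (hf1 x)
      · simp [hg, hx]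
      · rw [hh]; exact (Set.indicator_le_self' (fun _ _ => hf0 _) x).trans (hf1 x)
      · simp [hh, hx]
    · intro x
      by_cases hx : x ∈ U
      · exact Or.inr (by simp [hh, Set.disjoint_left.1 hd hx])
      · exact Or.inl (by simp [hg, hx])
    · intro x
      by_cases hx : x ∈ U
      · simp [hg, hh, hx, Set.disjoint_left.1 hd hx]
      · by_cases hx' : x ∈ V
        · simp [hg, hh, hx, hx']
        · simp [hg, hh, hx, hx', hfO]
  · rw [← le_sub_iff_add_le]
    refine tauOpen_le ζ fun f hf0 hf1 hfU => ?_
    rw [le_sub_comm]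
    refine tauOpen_le ζ fun g hg0 hg1 hgV => ?_
    rw [le_sub_iff_add_le']
    have hfg : ∀ x, f x = 0 ∨ g x = 0 := fun x => by
      by_cases hx : x ∈ U
      · exact Or.inr (hgV x (Set.disjoint_left.1 hd hx))
      · exact Or.inl (hfU x hx)
    rw [← zeta_add_of_mul_eq_zero ζ hf0 hg0 hfg (h := f + g) fun _ => rfl]
    refine le_tauOpen ζ hc (fun x => ?_) fun x hx => ?_
    · show f x + g x ≤ 1
      rcases hfg x with h | h <;> simp [h, hf1, hg1]
    · show f x + g x ≤ 0
      rw [hfU x fun h => hx (Or.inl h), hgV x fun h => hx (Or.inr h)]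
      simp

/-- Superadditivity for a disjoint pair of a compact set and an open set, reduced to compact
subsets of the union so that it applies whether the union is open or compact. -/
lemma tauCompact_add_tauOpen_le (ζ : QuasiIntegral X) {K O : Set X} (hK : IsCompact K)
    (hd : Disjoint K O) {a : ℝ}
    (h : ∀ C : Set X, IsCompact C → C ⊆ K ∪ O → tauCompact ζ C ≤ a) :
    tauCompact ζ K + tauOpen ζ O ≤ a := by
  rw [← le_sub_iff_add_le']
  refine tauOpen_le_of_compact ζ fun L hL hLO => ?_
  rw [le_sub_iff_add_le', ← tauCompact_union ζ hK hL (hd.mono_right hLO)]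
  exact h _ (hK.union hL) (union_subset_union_right _ hLO)

lemma tauOpen_eq_add (ζ : QuasiIntegral X) {K O : Set X} (hK : IsCompact K)
    (hO' : IsCompact (closure O)) (hd : Disjoint K O) (hU : IsOpen (K ∪ O))
    (hU' : IsCompact (closure (K ∪ O))) :
    tauOpen ζ (K ∪ O) = tauCompact ζ K + tauOpen ζ O := by
  apply le_antisymm
  · refine tauOpen_le ζ fun f _ hf1 hfU => ?_
    rw [← sub_le_iff_le_add]
    refine le_tauCompact ζ hK fun g hg0 hg1 => ?_
    rw [sub_le_iff_le_add]
    obtain ⟨u, hu0, hu1, huK, huU⟩ := exists_urysohn hK hU subset_union_left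
    -- Enlarge `f` to equal `1` on `{u ≥ 1/2}`, and cut `g` down to vanish on `{u ≤ 1/2}`.
    obtain ⟨f', hf'⟩ := exists_comp₂ f u (fun s t => max s (min 1 (2 * t))) (by fun_prop)
      (by simp)
    obtain ⟨g', hg'⟩ := exists_comp₂ g u (fun s t => min s (max (2 * t - 1) 0))
      (by fun_prop) (by simp)
    have hf'1 : ∀ x, f' x ≤ 1 := fun x => by
      rw [hf']; exact max_le (hf1 x) (min_le_left _ _)
    have hg'0 : ∀ x, 0 ≤ g' x := fun x => by
      rw [hg']; exact le_min (hg0 x) (le_max_right _ _)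
    have hfg : ∀ x, f' x = 1 ∨ g' x = 0 := fun x => by
      rcases le_total (2 * u x) 1 with h | h
      · right
        rw [hg', max_eq_right (by linarith), min_eq_right (hg0 x)]
      · left
        rw [hf', min_eq_left h, max_eq_right (hf1 x)]
    have h1 : ζ.toFun f ≤ ζ.toFun f' := ζ.mono' _ _ fun x => by rw [hf']; exact le_max_left _ _
    have h2 : ζ.toFun g' ≤ ζ.toFun g := ζ.mono' _ _ fun x => by rw [hg']; exact min_le_left _ _
    have h3 : ζ.toFun (f' - g') ≤ tauOpen ζ O := by
      refine le_tauOpen ζ hO' (fun x => ?_) fun x hx => ?_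
      · show f' x - g' x ≤ 1
        linarith [hf'1 x, hg'0 x]
      · show f' x - g' x ≤ 0
        by_cases hxK : x ∈ K
        · have : 1 ≤ g' x := by
            rw [hg', huK x hxK]
            exact le_min (hg1 x hxK) (le_max_of_le_left (by norm_num))
          linarith [hf'1 x]
        · have hxU : x ∉ K ∪ O := fun h => h.elim hxK hx
          have : f' x = 0 := by rw [hf', hfU x hxU, huU x hxU]; simp
          linarith [hg'0 x]
    have h4 := zeta_sub ζ hf'1 hg'0 hfg
    linarith
  · exact tauCompact_add_tauOpen_le ζ hK hd fun C hC hCU =>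
      tauCompact_le_tauOpen ζ hC hU hU' hCU

lemma tauCompact_eq_add (ζ : QuasiIntegral X) {K O : Set X} (hK : IsCompact K)
    (hO : IsOpen O) (hO' : IsCompact (closure O)) (hd : Disjoint K O)
    (hC : IsCompact (K ∪ O)) :
    tauCompact ζ (K ∪ O) = tauCompact ζ K + tauOpen ζ O := by
  apply le_antisymm
  · rw [← sub_le_iff_le_add]
    refine le_tauCompact_of_open ζ hK fun U hU hU' hKU => ?_
    rw [sub_le_iff_le_add]
    have hL : IsCompact ((K ∪ O) \ U) := hC.diff hU
    have hLO : (K ∪ O) \ U ⊆ O := fun x hx => hx.1.elim (fun h => (hx.2 (hKU h)).elim) id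
    have heq : (K ∪ O) \ U ∪ U = U ∪ O := by
      rw [Set.sdiff_union_self, union_comm _ U, ← union_assoc, union_eq_left.2 hKU]
    have hUO : IsOpen ((K ∪ O) \ U ∪ U) := heq ▸ hU.union hO
    have hUO' : IsCompact (closure ((K ∪ O) \ U ∪ U)) := by
      rw [heq, closure_union]; exact hU'.union hO'
    have h1 := tauOpen_eq_add ζ hL hU' disjoint_sdiff_left hUO hUO'
    have h2 : tauCompact ζ (K ∪ O) ≤ tauOpen ζ ((K ∪ O) \ U ∪ U) :=
      tauCompact_le_tauOpen ζ hC hUO hUO' (by rw [Set.sdiff_union_self]; exact subset_union_left)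
    have h3 := tauCompact_le_tauOpen ζ hL hO hO' hLO
    linarith
  · exact tauCompact_add_tauOpen_le ζ hK hd fun C _ hCU => tauCompact_mono ζ hC hCU

lemma inducedSetFun_union_compact_open (ζ : QuasiIntegral X) {K O : Set X} (hK : IsCompact K)
    (hO : IsOpen O) (hO' : IsCompact (closure O)) (hd : Disjoint K O)
    (hU : K ∪ O ∈ Admissible X) :
    inducedSetFun ζ (K ∪ O) = inducedSetFun ζ K + inducedSetFun ζ O := by
  rw [inducedSetFun_compact ζ hK, inducedSetFun_open ζ hO hO']
  rcases hU with hU | ⟨hU, hU'⟩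
  · rw [inducedSetFun_compact ζ hU, tauCompact_eq_add ζ hK hO hO' hd hU]
  · rw [inducedSetFun_open ζ hU hU', tauOpen_eq_add ζ hK hO' hd hU hU']

lemma inducedSetFun_mono (ζ : QuasiIntegral X) {A B : Set X} (hA : A ∈ Admissible X)
    (hB : B ∈ Admissible X) (h : A ⊆ B) : inducedSetFun ζ A ≤ inducedSetFun ζ B := by
  rcases hA with hA | ⟨hA, hA'⟩ <;> rcases hB with hB | ⟨hB, hB'⟩
  · rw [inducedSetFun_compact ζ hA, inducedSetFun_compact ζ hB]
    exact tauCompact_mono ζ hB h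
  · rw [inducedSetFun_compact ζ hA, inducedSetFun_open ζ hB hB']
    exact tauCompact_le_tauOpen ζ hA hB hB' h
  · rw [inducedSetFun_open ζ hA hA', inducedSetFun_compact ζ hB]
    exact tauOpen_le_tauCompact ζ hB h
  · rw [inducedSetFun_open ζ hA hA', inducedSetFun_open ζ hB hB']
    exact tauOpen_mono ζ hB' h

lemma inducedSetFun_nonneg (ζ : QuasiIntegral X) (A : Set X) : 0 ≤ inducedSetFun ζ A := by
  by_cases hA : IsCompact A
  · rw [inducedSetFun_compact ζ hA]; exact tauCompact_nonneg ζ A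
  by_cases hA' : IsOpen A ∧ IsCompact (closure A)
  · rw [inducedSetFun_open ζ hA'.1 hA'.2]
    exact (zeta_zero ζ).ge.trans (le_tauOpen ζ hA'.2 (by simp) (by simp))
  · simp [inducedSetFun, hA, hA']

end InducedTM

open InducedTM

/-- the induced set function `τ_ζ` of a quasi-integral `ζ` is a
topological measure (additive, monotone, outer regular on compacts and inner
regular on open sets with compact closure). -/
theorem inducedSetFun_isTopMeasure {X : Type*} [TopologicalSpace X] [T2Space X]
    [LocallyCompactSpace X] (ζ : QuasiIntegral X) :
    ∃ τ : TopMeasure X, τ.toFun = inducedSetFun ζ := by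
  refine ⟨⟨inducedSetFun ζ, fun A hA => ?_, inducedSetFun_nonneg ζ, ?_,
    fun A B hA hB h => inducedSetFun_mono ζ hA hB h, fun K hK => ?_, fun O hO hO' => ?_⟩, rfl⟩
  · have h := not_or.1 hA
    simp [inducedSetFun, h.1, h.2]
  · rintro A B (hA | ⟨hA, hA'⟩) (hB | ⟨hB, hB'⟩) hU hd
    · rw [inducedSetFun_compact ζ (hA.union hB), inducedSetFun_compact ζ hA,
        inducedSetFun_compact ζ hB, tauCompact_union ζ hA hB hd]
    · exact inducedSetFun_union_compact_open ζ hA hB hB' hd hU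
    · rw [union_comm, add_comm]
      rw [union_comm] at hU
      exact inducedSetFun_union_compact_open ζ hB hA hA' hd.symm hU
    · have hc : IsCompact (closure (A ∪ B)) := by rw [closure_union]; exact hA'.union hB'
      rw [inducedSetFun_open ζ (hA.union hB) hc, inducedSetFun_open ζ hA hA',
        inducedSetFun_open ζ hB hB', tauOpen_union ζ hA hB hA' hB' hd]
  · apply le_antisymm
    · obtain ⟨U, hU, hKU, -, hU'⟩ := exists_open_between_and_isCompact_closure hK isOpen_univ
        (subset_univ K)
      refine le_csInf ⟨_, U, ⟨hU, hU', hKU⟩, rfl⟩ ?_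
      rintro _ ⟨V, ⟨hV, hV', hKV⟩, rfl⟩
      exact inducedSetFun_mono ζ (Or.inl hK) (Or.inr ⟨hV, hV'⟩) hKV
    · rw [inducedSetFun_compact ζ hK]
      refine le_tauCompact_of_open ζ hK fun U hU hU' hKU => ?_
      rw [← inducedSetFun_open ζ hU hU']
      refine csInf_le ⟨0, ?_⟩ ⟨U, ⟨hU, hU', hKU⟩, rfl⟩
      rintro _ ⟨V, -, rfl⟩
      exact inducedSetFun_nonneg ζ V
  · have hmono : ∀ K : Set X, IsCompact K → K ⊆ O → inducedSetFun ζ K ≤ inducedSetFun ζ O :=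
      fun K hK hKO => inducedSetFun_mono ζ (Or.inl hK) (Or.inr ⟨hO, hO'⟩) hKO
    apply le_antisymm
    · rw [inducedSetFun_open ζ hO hO']
      refine tauOpen_le_of_compact ζ fun K hK hKO => ?_
      rw [← inducedSetFun_compact ζ hK]
      refine le_csSup ⟨inducedSetFun ζ O, ?_⟩ ⟨K, ⟨hK, hKO⟩, rfl⟩
      rintro _ ⟨L, ⟨hL, hLO⟩, rfl⟩
      exact hmono L hL hLO
    · refine csSup_le ⟨_, ∅, ⟨isCompact_empty, empty_subset O⟩, rfl⟩ ?_
      rintro _ ⟨L, ⟨hL, hLO⟩, rfl⟩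
      exact hmono L hL hLO

end
end

section
/- Let X be a locally compact Hausdorff space and let ζ be a quasi-integral on X. Then for every compact K ⊆ X, τ_ζ(K) = inf{τ_ζ(O) : O open with compact closure, O ⊇ K} (outer regularity of τ_ζ on compact sets). -/
/-!
A Urysohn function between `1_K` and `1_O` gives `τ(K) ≤ τ(O)` whenever `K ⊆ O`. Conversely, let
`f ≥ 1_K` and `c > 1`. The open set `O = {c f > 1}` contains `K` and has compact closure, and
every `g ≤ 1_O` satisfies `g ≤ c f`, so `τ(O) ≤ ζ(c f) = c ζ(f)` by monotonicity and homogeneity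
of `ζ`. Letting `c ↓ 1` bounds the infimum of the `τ(O)` by `ζ(f)`, hence by `τ(K)`.
Since the infima and suprema are taken in `ℝ`, the sets involved are also shown to be
bounded and nonempty.
-/

open Set Topology
open scoped CompactlySupported

noncomputable section

variable {X : Type*} [TopologicalSpace X]

/-- Urysohn's lemma for a compact set inside an open set, with an interpolating function
in `C_c(X, ℝ)`. -/
lemma exists_between_indicators [T2Space X] [LocallyCompactSpace X] {K O : Set X}
    (hK : IsCompact K) (hO : IsOpen O) (hKO : K ⊆ O) :
    ∃ f : C_c(X, ℝ), (∀ x, K.indicator (fun _ => (1 : ℝ)) x ≤ f x) ∧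
      ∀ x, f x ≤ O.indicator (fun _ => (1 : ℝ)) x := by
  obtain ⟨f, hf1, hf0, hfc, hf⟩ := exists_continuous_one_zero_of_isCompact hK hO.isClosed_compl
    (disjoint_compl_right_iff_subset.mpr hKO)
  refine ⟨⟨f, hfc⟩, fun x => ?_, fun x => ?_⟩
  · change _ ≤ f x
    by_cases hx : x ∈ K
    · simp [hx, hf1 hx]
    · simpa [hx] using (hf x).1
  · change f x ≤ _
    by_cases hx : x ∈ O
    · simpa [hx] using (hf x).2
    · simp [hx, hf0 (show x ∈ Oᶜ from hx)]

lemma nonneg_of_indicator_le {K : Set X} {f : C_c(X, ℝ)}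
    (hf : ∀ x, K.indicator (fun _ => (1 : ℝ)) x ≤ f x) (x : X) : 0 ≤ f x :=
  (indicator_nonneg (fun _ _ => zero_le_one) x).trans (hf x)

lemma bddBelow_image_ge_indicator (ζ : QuasiIntegral X) (K : Set X) :
    BddBelow (ζ.toFun '' {f : C_c(X, ℝ) | ∀ x, K.indicator (fun _ => (1 : ℝ)) x ≤ f x}) := by
  refine ⟨ζ.toFun 0, ?_⟩
  rintro _ ⟨f, hf, rfl⟩
  exact ζ.mono' _ _ fun x => nonneg_of_indicator_le hf x

lemma bddAbove_image_le_indicator [T2Space X] [LocallyCompactSpace X] (ζ : QuasiIntegral X)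
    {O : Set X} (hO : IsCompact (closure O)) :
    BddAbove (ζ.toFun '' {f : C_c(X, ℝ) | ∀ x, f x ≤ O.indicator (fun _ => (1 : ℝ)) x}) := by
  obtain ⟨g, hg, -⟩ := exists_between_indicators hO isOpen_univ (subset_univ _)
  refine ⟨ζ.toFun g, ?_⟩
  rintro _ ⟨f, hf, rfl⟩
  refine ζ.mono' _ _ fun x => (hf x).trans (le_trans ?_ (hg x))
  exact indicator_le_indicator_of_subset subset_closure (fun _ => zero_le_one) x

lemma zero_mem_le_indicator (O : Set X) :
    (0 : C_c(X, ℝ)) ∈ {f : C_c(X, ℝ) | ∀ x, f x ≤ O.indicator (fun _ => (1 : ℝ)) x} :=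
  fun x => indicator_nonneg (fun _ _ => zero_le_one) x

lemma tauCompact_le_tauOpen [T2Space X] [LocallyCompactSpace X] (ζ : QuasiIntegral X)
    {K O : Set X} (hK : IsCompact K) (hO : IsOpen O) (hOc : IsCompact (closure O))
    (hKO : K ⊆ O) : tauCompact ζ K ≤ tauOpen ζ O := by
  obtain ⟨f, hKf, hfO⟩ := exists_between_indicators hK hO hKO
  exact (csInf_le (bddBelow_image_ge_indicator ζ K) ⟨f, hKf, rfl⟩).trans
    (le_csSup (bddAbove_image_le_indicator ζ hOc) ⟨f, hfO, rfl⟩)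

/-- The superlevel set `{c f > 1}` is an open neighbourhood of `K` on which `τ_ζ` is almost
as small as `ζ(f)`. -/
lemma exists_open_tauOpen_le (ζ : QuasiIntegral X) {K : Set X} {f : C_c(X, ℝ)}
    (hf : ∀ x, K.indicator (fun _ => (1 : ℝ)) x ≤ f x) {c : ℝ} (hc : 1 < c) :
    ∃ O : Set X, (IsOpen O ∧ IsCompact (closure O) ∧ K ⊆ O) ∧
      tauOpen ζ O ≤ c * ζ.toFun f := by
  have hsupp : {x | 1 < c * f x} ⊆ tsupport f := fun x hx => by
    refine subset_tsupport _ fun h0 => ?_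
    simp only [mem_ofPred_eq, h0] at hx
    linarith
  refine ⟨{x | 1 < c * f x}, ⟨?_, ?_, ?_⟩, ?_⟩
  · exact isOpen_lt continuous_const (continuous_const.mul f.continuous)
  · exact f.hasCompactSupport.isCompact.of_isClosed_subset isClosed_closure
      (closure_minimal hsupp (isClosed_tsupport _))
  · intro x hx
    have h1 := hf x
    rw [indicator_of_mem hx] at h1
    show 1 < c * f x
    nlinarith
  · rw [← ζ.quasilin_smul' f id continuous_id rfl c f (c • f) (fun _ => rfl) (fun _ => rfl)]
    refine csSup_le ⟨_, 0, zero_mem_le_indicator _, rfl⟩ ?_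
    rintro _ ⟨g, hg, rfl⟩
    refine ζ.mono' _ _ fun x => (hg x).trans ?_
    change _ ≤ c * f x
    by_cases hx : 1 < c * f x
    · rw [indicator_of_mem (show x ∈ {x | 1 < c * f x} from hx)]
      exact hx.le
    · rw [indicator_of_notMem (show x ∉ {x | 1 < c * f x} from hx)]
      exact mul_nonneg (by linarith) (nonneg_of_indicator_le hf x)

/-- outer regularity of `τ_ζ` on compact sets:
`τ_ζ(K) = inf {τ_ζ(O) | O ∈ 𝒪(X), O ⊇ K}`. -/
theorem inducedSetFun_outerReg {X : Type*} [TopologicalSpace X] [T2Space X]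
    [LocallyCompactSpace X] (ζ : QuasiIntegral X) (K : Set X) (hK : IsCompact K) :
    tauCompact ζ K =
      sInf (tauOpen ζ '' {O : Set X | IsOpen O ∧ IsCompact (closure O) ∧ K ⊆ O}) := by
  have hbdd : ∀ t ∈ tauOpen ζ '' {O : Set X | IsOpen O ∧ IsCompact (closure O) ∧ K ⊆ O},
      tauCompact ζ K ≤ t := by
    rintro _ ⟨O, ⟨hO, hOc, hKO⟩, rfl⟩
    exact tauCompact_le_tauOpen ζ hK hO hOc hKO
  obtain ⟨f₀, hf₀, -⟩ := exists_between_indicators hK isOpen_univ (subset_univ K)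
  obtain ⟨O₀, hO₀, -⟩ := exists_open_tauOpen_le ζ hf₀ one_lt_two
  refine le_antisymm (le_csInf ⟨_, O₀, hO₀, rfl⟩ hbdd) (le_csInf ⟨_, f₀, hf₀, rfl⟩ ?_)
  rintro _ ⟨f, hf, rfl⟩
  have hlim : Filter.Tendsto (fun c : ℝ => c * ζ.toFun f) (𝓝[>] 1) (𝓝 (ζ.toFun f)) := by
    have : Filter.Tendsto (fun c : ℝ => c * ζ.toFun f) (𝓝 1) (𝓝 (1 * ζ.toFun f)) :=
      (continuous_id.mul continuous_const).tendsto 1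
    rw [one_mul] at this
    exact this.mono_left nhdsWithin_le_nhds
  refine ge_of_tendsto hlim ?_
  filter_upwards [self_mem_nhdsWithin] with c hc
  obtain ⟨O, hO, hle⟩ := exists_open_tauOpen_le ζ hf hc
  exact (csInf_le ⟨_, hbdd⟩ ⟨O, hO, rfl⟩).trans hle

end
end

section
/- Let X be a locally compact Hausdorff space and let ζ be a quasi-integral on X. Let K ⊆ X be compact and O ⊆ X open with compact closure, with K and O disjoint and such that U = K ∪ O is open (necessarily with compact closure). Then τ_ζ(U) = τ_ζ(K) + τ_ζ(O). -/
/-!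
Both inequalities come from quasi-linearity applied to two functions `a` and `b` that are
themselves functions of one element `w` of `C_c(X)`. This happens in two situations.

* If `a ≤ 1`, `0 ≤ b` and `a = 1` wherever `b ≠ 0`, then `a = min(w, 1)` and
  `b = max(w - 1, 0)` for `w = a + b` (`QuasiIntegral.sub_add_of_eq_one`).
* If `a, b ≥ 0` and `a b = 0`, then `a = max(w, 0)` and `b = max(-w, 0)` for `w = a - b`
  (`QuasiIntegral.add_of_disjoint`).

Write `U = K ∪ O`. For `τ(U) ≤ τ(K) + τ(O)`, take `f ≤ 1_U` and `g ≥ 1_K`. Enlarging `f`, it may be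
assumed to be nonnegative and equal to `1` on a neighbourhood of `K`; shrinking `g`, it may be
assumed that `0 ≤ g ≤ 1` and `f = 1` wherever `g ≠ 0`. The first situation makes
`ζ(f) = ζ(g) + ζ(f - g)`, and `f - g ≤ 1_O` because `f - g ≤ 0` on `K`.

For `τ(K) + τ(O) ≤ τ(U)`, take `h ≤ 1_O`. By Lipschitz continuity `ζ(h)` is changed
arbitrarily little when `max(h, 0)` is replaced by `h' = max(h - ε, 0)`, whose support lies in the
compact set `{h ≥ ε} ⊆ O`. A Urysohn function `κ` equal to `1` on `K` and supported in
`U \ {h ≥ ε}` then satisfies `κ h' = 0` and `κ + h' ≤ 1_U`, so the second situation gives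
`ζ(κ) + ζ(h') ≤ τ(U)`, while `τ(K) ≤ ζ(κ)`.
-/

open Set Topology
open scoped CompactlySupported

noncomputable section

variable {X : Type*} [TopologicalSpace X]

namespace QuasiIntegral

lemma map_zero (ζ : QuasiIntegral X) : ζ.toFun 0 = 0 := by
  have h := ζ.quasilin_smul' 0 (fun _ => 0) continuous_const rfl 0 0 0
    (fun _ => rfl) (fun x => by simp)
  simpa using h

/-- If `0 ≤ b`, `a ≤ 1` and `a = 1` wherever `b ≠ 0`, then `a = min(w, 1)` and `b = max(w - 1, 0)`
for `w = a + b`, so `a - b` and `b` are functions of `w`. -/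
lemma sub_add_of_eq_one (ζ : QuasiIntegral X) (a b : C_c(X, ℝ)) (ha : ∀ x, a x ≤ 1)
    (hb : ∀ x, 0 ≤ b x) (hab : ∀ x, b x ≠ 0 → a x = 1) :
    ζ.toFun a = ζ.toFun (a - b) + ζ.toFun b := by
  have h1 : ∀ x, a x = min ((a + b) x) 1 := by
    intro x
    by_cases hx : b x = 0
    · simp [hx, ha x]
    · simp [hab x hx, hb x]
  have h2 : ∀ x, b x = max ((a + b) x - 1) 0 := by
    intro x
    by_cases hx : b x = 0
    · simp [hx, ha x]
    · simp [hab x hx, hb x]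
  refine ζ.quasilin_add' (a + b) (fun t => min t 1 - max (t - 1) 0)
    (fun t => max (t - 1) 0) (by fun_prop) (by fun_prop) (by simp) (by simp)
    (a - b) b a (fun x => ?_) h2 fun x => ?_
  · rw [← h1 x, ← h2 x]
    rfl
  · rw [← h1 x, ← h2 x]
    ring

/-- A quasi-integral is additive on nonnegative functions with disjoint carriers. -/
lemma add_of_disjoint (ζ : QuasiIntegral X) (a b : C_c(X, ℝ)) (ha : ∀ x, 0 ≤ a x)
    (hb : ∀ x, 0 ≤ b x) (hab : ∀ x, a x = 0 ∨ b x = 0) :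
    ζ.toFun (a + b) = ζ.toFun a + ζ.toFun b := by
  have h1 : ∀ x, a x = max ((a - b) x) 0 := by
    intro x
    rcases hab x with hx | hx
    · simp [hx, hb x]
    · simp [hx, ha x]
  have h2 : ∀ x, b x = max (-((a - b) x)) 0 := by
    intro x
    rcases hab x with hx | hx
    · simp [hx, hb x]
    · simp [hx, ha x]
  refine ζ.quasilin_add' (a - b) (fun t => max t 0) (fun t => max (-t) 0)
    (by fun_prop) (by fun_prop) (by simp) (by simp) a b (a + b) h1 h2 fun x => ?_
  rw [← h1 x, ← h2 x]
  rfl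

/-- The infimum defining `τ_ζ(K)` is over a set bounded below by `ζ(0) = 0`. -/
lemma tauCompact_le (ζ : QuasiIntegral X) {K : Set X} (f : C_c(X, ℝ))
    (hf : ∀ x, K.indicator (fun _ => (1 : ℝ)) x ≤ f x) : tauCompact ζ K ≤ ζ.toFun f := by
  refine csInf_le ⟨0, ?_⟩ ⟨f, hf, rfl⟩
  rintro _ ⟨g, hg, rfl⟩
  rw [← ζ.map_zero]
  exact ζ.mono' _ _ fun x => (indicator_nonneg (fun _ _ => zero_le_one) x).trans (hg x)

lemma tauOpen_le (ζ : QuasiIntegral X) {O : Set X} {c : ℝ}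
    (h : ∀ f : C_c(X, ℝ), (∀ x, f x ≤ O.indicator (fun _ => (1 : ℝ)) x) → ζ.toFun f ≤ c) :
    tauOpen ζ O ≤ c := by
  refine csSup_le ⟨_, 0, fun x => indicator_nonneg (fun _ _ => zero_le_one) x, rfl⟩ ?_
  rintro _ ⟨f, hf, rfl⟩
  exact h f hf

variable [T2Space X] [LocallyCompactSpace X]

/-- Urysohn's lemma with values in `C_c(X)`. -/
lemma exists_urysohn {K V : Set X} (hK : IsCompact K) (hV : IsOpen V) (hKV : K ⊆ V) :
    ∃ κ : C_c(X, ℝ), (∀ x ∈ K, κ x = 1) ∧ (∀ x, x ∉ V → κ x = 0) ∧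
      (∀ x, 0 ≤ κ x) ∧ ∀ x, κ x ≤ 1 := by
  obtain ⟨f, h1, h2, h3, h4⟩ := exists_continuousMap_one_of_isCompact_subset_isOpen hK hV hKV
  exact ⟨⟨f, h2⟩, fun x hx => h1 hx,
    fun x hx => image_eq_zero_of_notMem_tsupport fun h => hx (h3 h),
    fun x => (h4 x).1, fun x => (h4 x).2⟩

/-- For `O` relatively compact, the supremum defining `τ_ζ(O)` is over a set bounded above by
`ζ(e)`, where `e ∈ C_c(X)` equals `1` on the closure of `O`. -/
lemma le_tauOpen (ζ : QuasiIntegral X) {O : Set X} (hO : IsCompact (closure O)) (f : C_c(X, ℝ))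
    (hf : ∀ x, f x ≤ O.indicator (fun _ => (1 : ℝ)) x) : ζ.toFun f ≤ tauOpen ζ O := by
  obtain ⟨e, e1, -, e0, -⟩ := exists_urysohn hO isOpen_univ (subset_univ _)
  refine le_csSup ⟨ζ.toFun e, ?_⟩ ⟨f, hf, rfl⟩
  rintro _ ⟨g, hg, rfl⟩
  refine ζ.mono' _ _ fun x => (hg x).trans ?_
  exact indicator_le' (fun y hy => (e1 y (subset_closure hy)).ge) (fun y _ => e0 y) x

end QuasiIntegral

lemma tauOpen_union_le [T2Space X] [LocallyCompactSpace X] (ζ : QuasiIntegral X) {K O : Set X}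
    (hK : IsCompact K) (hOc : IsCompact (closure O)) (hU : IsOpen (K ∪ O)) :
    tauOpen ζ (K ∪ O) ≤ tauCompact ζ K + tauOpen ζ O := by
  refine ζ.tauOpen_le fun f₀ hf₀ => ?_
  obtain ⟨L, hL, hKL, hLU⟩ := exists_compact_between hK hU subset_union_left
  obtain ⟨κ, κ1, κU, κ0, κle⟩ := QuasiIntegral.exists_urysohn hL hU hLU
  obtain ⟨μ, μ1, μL, μ0, μle⟩ := QuasiIntegral.exists_urysohn hK isOpen_interior hKL
  rw [← sub_le_iff_le_add]
  refine le_csInf ⟨_, μ, fun x => ?_, rfl⟩ ?_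
  · exact indicator_le' (fun y hy => (μ1 y hy).ge) (fun y _ => μ0 y) x
  rintro _ ⟨g, hg, rfl⟩
  have g0 : ∀ x, 0 ≤ g x := fun x => (indicator_nonneg (fun _ _ => zero_le_one) x).trans (hg x)
  have g1 : ∀ x ∈ K, 1 ≤ g x := fun x hx => by simpa [hx] using hg x
  have f₀le : ∀ x, f₀ x ≤ 1 := fun x =>
    (hf₀ x).trans (indicator_le_self' (fun _ _ => zero_le_one) x)
  have f₀U : ∀ x, x ∉ K ∪ O → f₀ x ≤ 0 := fun x hx => by
    have h := hf₀ x
    rwa [indicator_of_notMem hx] at h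
  -- `f` is `f₀` enlarged to equal `1` on the neighbourhood `L` of `K`;
  -- `g'` is `g` cut down to live on `L`.
  set f : C_c(X, ℝ) := f₀ ⊔ κ with hf
  set g' : C_c(X, ℝ) := g ⊓ μ with hg'
  have fx : ∀ x, f x = max (f₀ x) (κ x) := fun x => rfl
  have gx : ∀ x, g' x = min (g x) (μ x) := fun x => rfl
  have fle : ∀ x, f x ≤ 1 := fun x => max_le (f₀le x) (κle x)
  have g'0 : ∀ x, 0 ≤ g' x := fun x => le_min (g0 x) (μ0 x)
  have fg : ∀ x, g' x ≠ 0 → f x = 1 := by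
    intro x hx
    have hxL : x ∈ L := by
      by_contra hn
      refine hx ?_
      rw [gx, μL x fun h => hn (interior_subset h), min_eq_right (g0 x)]
    rw [fx, κ1 x hxL, max_eq_right (f₀le x)]
  have key := ζ.sub_add_of_eq_one f g' fle g'0 fg
  have h1 : ζ.toFun f₀ ≤ ζ.toFun f := ζ.mono' _ _ fun x => le_max_left _ _
  have h2 : ζ.toFun g' ≤ ζ.toFun g := ζ.mono' _ _ fun x => min_le_left _ _
  have h3 : ζ.toFun (f - g') ≤ tauOpen ζ O := by
    refine ζ.le_tauOpen hOc _ fun x => ?_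
    have hs : (f - g') x = f x - g' x := rfl
    by_cases hxO : x ∈ O
    · rw [indicator_of_mem hxO, hs]
      linarith [fle x, g'0 x]
    · rw [indicator_of_notMem hxO, hs]
      by_cases hxK : x ∈ K
      · have : 1 ≤ g' x := le_min (g1 x hxK) (μ1 x hxK).ge
        linarith [fle x]
      · have hxU : x ∉ K ∪ O := fun h => h.elim hxK hxO
        have : f x ≤ 0 := max_le (f₀U x hxU) (κU x hxU).le
        linarith [g'0 x]
  linarith

lemma le_tauOpen_union [T2Space X] [LocallyCompactSpace X] (ζ : QuasiIntegral X) {K O : Set X}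
    (hK : IsCompact K) (hOc : IsCompact (closure O)) (hdisj : Disjoint K O)
    (hU : IsOpen (K ∪ O)) :
    tauCompact ζ K + tauOpen ζ O ≤ tauOpen ζ (K ∪ O) := by
  have hUc : IsCompact (closure (K ∪ O)) := by
    rw [closure_union, hK.isClosed.closure_eq]
    exact hK.union hOc
  rw [add_comm, ← le_sub_iff_add_le]
  refine ζ.tauOpen_le fun h₀ hh₀ => ?_
  set h : C_c(X, ℝ) := h₀ ⊔ 0 with hh
  have h0 : ∀ x, 0 ≤ h x := fun x => le_max_right _ _
  have hO1 : ∀ x, h x ≤ O.indicator (fun _ => (1 : ℝ)) x := fun x =>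
    max_le (hh₀ x) (indicator_nonneg (fun _ _ => zero_le_one) x)
  have hle : ∀ x, h x ≤ 1 := fun x =>
    (hO1 x).trans (indicator_le_self' (fun _ _ => zero_le_one) x)
  have hpos : ∀ x, 0 < h x → x ∈ O := by
    intro x hx
    by_contra hn
    have := hO1 x
    rw [indicator_of_notMem hn] at this
    linarith
  obtain ⟨N, hN, hLip⟩ := ζ.lipschitz' (tsupport h) h.hasCompactSupport'
  refine (ζ.mono' h₀ h fun x => le_max_left _ _).trans (le_of_forall_pos_le_add fun δ hδ => ?_)
  -- The Lipschitz error `N * ε` is at most `δ` for this `ε`, also when `N = 0`.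
  obtain ⟨ε, hε, hNε⟩ : ∃ ε > 0, N * ε ≤ δ := by
    refine ⟨δ / (N + 1), by positivity, ?_⟩
    rw [mul_div_assoc', div_le_iff₀ (by positivity)]
    nlinarith
  have hcs : HasCompactSupport fun x => max (h x - ε) 0 :=
    HasCompactSupport.comp_left (g := fun t : ℝ => max (t - ε) 0) h.hasCompactSupport'
      (by simp [hε.le])
  let h' : C_c(X, ℝ) := ⟨⟨fun x => max (h x - ε) 0, by fun_prop⟩, hcs⟩
  have h'x : ∀ x, h' x = max (h x - ε) 0 := fun x => rfl
  have hsub : tsupport h' ⊆ tsupport h := by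
    refine closure_mono fun x hx => ?_
    contrapose! hx
    have : h x = 0 := by simpa using hx
    simp [h'x, this, hε.le]
  have hdist : |ζ.toFun h - ζ.toFun h'| ≤ δ := by
    refine (hLip h h' subset_rfl hsub).trans (le_trans ?_ hNε)
    refine mul_le_mul_of_nonneg_left (Real.iSup_le (fun x => ?_) hε.le) hN
    rw [h'x, abs_le]
    rcases le_total (h x - ε) 0 with hx | hx
    · rw [max_eq_right hx]
      constructor <;> linarith [h0 x]
    · rw [max_eq_left hx]
      constructor <;> linarith
  have hVo : IsOpen ((K ∪ O) ∩ {x | h x < ε}) :=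
    hU.inter (isOpen_lt (by fun_prop) continuous_const)
  obtain ⟨κ, κ1, κV, κ0, κle⟩ := QuasiIntegral.exists_urysohn hK hVo fun x hx => by
    refine ⟨Or.inl hx, ?_⟩
    have : ¬ 0 < h x := fun hp => hdisj.le_bot ⟨hx, hpos x hp⟩
    simp only [mem_ofPred_eq]
    linarith
  have h'0 : ∀ x, 0 ≤ h' x := fun x => le_max_right _ _
  have h'le : ∀ x, h' x ≤ h x := fun x => max_le (by linarith) (h0 x)
  have hdis : ∀ x, κ x = 0 ∨ h' x = 0 := by
    intro x
    by_cases hx : h x < ε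
    · exact Or.inr (max_eq_right (by linarith))
    · exact Or.inl (κV x fun hm => hx hm.2)
  have key := ζ.add_of_disjoint κ h' κ0 h'0 hdis
  have hK' : tauCompact ζ K ≤ ζ.toFun κ := ζ.tauCompact_le κ fun x =>
    indicator_le' (fun y hy => (κ1 y hy).ge) (fun y _ => κ0 y) x
  have hU' : ζ.toFun (κ + h') ≤ tauOpen ζ (K ∪ O) := by
    refine ζ.le_tauOpen hUc _ fun x => ?_
    have hs : (κ + h') x = κ x + h' x := rfl
    rw [hs]
    by_cases hx : x ∈ K ∪ O
    · rw [indicator_of_mem hx]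
      rcases hdis x with hz | hz
      · linarith [h'le x, hle x]
      · linarith [κle x]
    · have hhx : ¬ 0 < h x := fun hp => hx (Or.inr (hpos x hp))
      rw [indicator_of_notMem hx, κV x fun hm => hx hm.1]
      linarith [h'le x]
  linarith [(abs_le.1 hdist).2]

/-- additivity of `τ_ζ` for a disjoint pair consisting of a compact
set `K` and an open set `O` with compact closure whose union `U = K ∪ O` is open:
`τ_ζ(U) = τ_ζ(K) + τ_ζ(O)`. -/
theorem inducedSetFun_additive_compact_open {X : Type*} [TopologicalSpace X]
    [T2Space X] [LocallyCompactSpace X] (ζ : QuasiIntegral X) (K O : Set X)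
    (hK : IsCompact K) (hO : IsOpen O) (hOc : IsCompact (closure O))
    (hdisj : Disjoint K O) (hU : IsOpen (K ∪ O)) :
    tauOpen ζ (K ∪ O) = tauCompact ζ K + tauOpen ζ O := by
  exact le_antisymm (tauOpen_union_le ζ hK hOc hU) (le_tauOpen_union ζ hK hOc hdisj hU)

end
end

section
/- Let X be a locally compact Hausdorff space, τ a topological measure on X, and O ⊆ X an open subset with compact closure. Let Ô = O ∪ {∞} be the one-point compactification of O. Define τ̂ on the compact and the open subsets of Ô by: τ̂(U) = τ(U) for U ⊆ O open, τ̂(K) = τ(K) for K ⊆ O compact, τ̂((O∖K) ∪ {∞}) = τ(O∖K) for K ⊆ O compact, and τ̂((O∖U) ∪ {∞}) = τ(O) − τ(U) for U ⊆ O open. Then τ̂ is well defined and is a topological measure on the compact Hausdorff space Ô. -/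
/-!
Write `B` for the trace on `O` of a set `A ⊆ Ô`, regarded as a subset of `X`. Because
`τ(O ∖ K) = τ(O) − τ(K)` for compact `K ⊆ O`, the four prescriptions for `τ̂` collapse into two:
`τ̂(A) = τ(B)` if `∞ ∉ A`, and `τ̂(A) = τ(O) − τ(O ∖ B)` if `∞ ∈ A`. In particular `τ̂` is
well defined and satisfies the duality `τ̂(Aᶜ) = τ(O) − τ̂(A)` (`hatFun_compl`).

Traces of open or closed sets missing `∞` are admissible in `X`. Additivity therefore reduces to
additivity of `τ`, after passing to complements when `∞` belongs to one of the two sets.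
Monotonicity reduces to that of `τ`, except when `∞` lies in the larger set only; that case is
the superadditivity `τ(B) + τ(C) ≤ τ(O)` for disjoint admissible `B, C ⊆ O`
(`TopMeasure.add_le_of_disjoint`). Outer regularity at a compact set comes from outer regularity
of `τ` if the set misses `∞`, and from inner regularity of `τ` applied to the complement
otherwise. Inner regularity of `τ̂` is dual to its outer regularity.
-/

open Set Topology
open scoped CompactlySupported

noncomputable section

variable {X : Type*} [TopologicalSpace X]

/-! ### Approximation and superadditivity for topological measures -/

section TopMeasureLemmas

lemma TopMeasure.exists_open_lt (τ : TopMeasure X) {K V : Set X} (hK : IsCompact K)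
    (hV : IsOpen V) (hVc : IsCompact (closure V)) (hKV : K ⊆ V) {ε : ℝ} (hε : 0 < ε) :
    ∃ W, IsOpen W ∧ IsCompact (closure W) ∧ K ⊆ W ∧ τ.toFun W < τ.toFun K + ε := by
  have hlt : sInf (τ.toFun '' {O : Set X | IsOpen O ∧ IsCompact (closure O) ∧ K ⊆ O})
      < τ.toFun K + ε := by
    rw [← τ.outer_reg' K hK]; linarith
  obtain ⟨_, ⟨W, ⟨h1, h2, h3⟩, rfl⟩, h⟩ :=
    exists_lt_of_csInf_lt (by exact ⟨_, V, ⟨hV, hVc, hKV⟩, rfl⟩) hlt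
  exact ⟨W, h1, h2, h3, h⟩

lemma TopMeasure.exists_compact_gt (τ : TopMeasure X) {U : Set X} (hU : IsOpen U)
    (hUc : IsCompact (closure U)) {ε : ℝ} (hε : 0 < ε) :
    ∃ K, IsCompact K ∧ K ⊆ U ∧ τ.toFun U - ε < τ.toFun K := by
  have hlt : τ.toFun U - ε < sSup (τ.toFun '' {K : Set X | IsCompact K ∧ K ⊆ U}) := by
    rw [← τ.inner_reg' U hU hUc]; linarith
  obtain ⟨_, ⟨K, ⟨h1, h2⟩, rfl⟩, h⟩ :=
    exists_lt_of_lt_csSup (by exact ⟨_, ∅, ⟨isCompact_empty, empty_subset _⟩, rfl⟩) hlt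
  exact ⟨K, h1, h2, h⟩

lemma isCompact_closure_of_subset {O U : Set X} (hOc : IsCompact (closure O)) (h : U ⊆ O) :
    IsCompact (closure U) :=
  hOc.of_isClosed_subset isClosed_closure (closure_mono h)

variable [T2Space X]

/-- The case where the first set is compact: the second one lies in `O \ B`, whose measure is
`τ O - τ B`. -/
lemma TopMeasure.add_le_of_disjoint_of_isCompact (τ : TopMeasure X) {O B C : Set X}
    (hO : IsOpen O) (hOc : IsCompact (closure O)) (hB : IsCompact B) (hC : C ∈ Admissible X)
    (hBO : B ⊆ O) (hCO : C ⊆ O) (hd : Disjoint B C) :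
    τ.toFun B + τ.toFun C ≤ τ.toFun O := by
  have hadm : O \ B ∈ Admissible X :=
    Or.inr ⟨hO.sdiff hB.isClosed, isCompact_closure_of_subset hOc sdiff_subset⟩
  have hadd := τ.additive' B (O \ B) (Or.inl hB) hadm
    (by rw [union_sdiff_cancel hBO]; exact Or.inr ⟨hO, hOc⟩) disjoint_sdiff_right
  rw [union_sdiff_cancel hBO] at hadd
  have := τ.mono' C (O \ B) hC hadm (subset_sdiff.2 ⟨hCO, hd.symm⟩)
  linarith

/-- Superadditivity inside `O`. The union `B ∪ C` itself need not be admissible. -/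
lemma TopMeasure.add_le_of_disjoint (τ : TopMeasure X) {O B C : Set X}
    (hO : IsOpen O) (hOc : IsCompact (closure O)) (hB : B ∈ Admissible X)
    (hC : C ∈ Admissible X) (hBO : B ⊆ O) (hCO : C ⊆ O) (hd : Disjoint B C) :
    τ.toFun B + τ.toFun C ≤ τ.toFun O := by
  rcases hB with hB | hB
  · exact τ.add_le_of_disjoint_of_isCompact hO hOc hB hC hBO hCO hd
  rcases hC with hC | hC
  · have := τ.add_le_of_disjoint_of_isCompact hO hOc hC (Or.inr hB) hCO hBO hd.symm
    linarith
  have hadm : B ∪ C ∈ Admissible X :=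
    Or.inr ⟨hB.1.union hC.1, isCompact_closure_of_subset hOc (union_subset hBO hCO)⟩
  rw [← τ.additive' B C (Or.inr hB) (Or.inr hC) hadm hd]
  exact τ.mono' _ _ hadm (Or.inr ⟨hO, hOc⟩) (union_subset hBO hCO)

end TopMeasureLemmas

/-! ### Traces of subsets of the one-point compactification -/

section Hat

open scoped OnePoint

/-- The trace on `O` of a subset of the one-point compactification of `O`, as a subset of `X`. -/
def trace {X : Type*} (O : Set X) (A : Set (OnePoint O)) : Set X :=
  Subtype.val '' ((fun x : O => (x : OnePoint O)) ⁻¹' A)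

lemma trace_subset {X : Type*} (O : Set X) (A : Set (OnePoint O)) : trace O A ⊆ O := by
  rintro _ ⟨x, -, rfl⟩; exact x.2

lemma trace_mono {X : Type*} (O : Set X) {A B : Set (OnePoint O)} (h : A ⊆ B) : trace O A ⊆ trace O B :=
  image_mono (preimage_mono h)

lemma trace_union {X : Type*} (O : Set X) (A B : Set (OnePoint O)) :
    trace O (A ∪ B) = trace O A ∪ trace O B := by
  simp only [trace, preimage_union, image_union]

lemma trace_disjoint {X : Type*} (O : Set X) {A B : Set (OnePoint O)} (h : Disjoint A B) :
    Disjoint (trace O A) (trace O B) :=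
  disjoint_image_of_injective Subtype.val_injective (h.preimage _)

lemma trace_image {X : Type*} (O : Set X) {U : Set X} (h : U ⊆ O) :
    trace O ((fun x : O => (x : OnePoint O)) '' {x : O | (x : X) ∈ U}) = U := by
  rw [trace, preimage_image_eq _ OnePoint.coe_injective]
  ext x
  constructor
  · rintro ⟨y, hy, rfl⟩; exact hy
  · intro hx; exact ⟨⟨x, h hx⟩, hx, rfl⟩

lemma insert_image_diff {X : Type*} (O U : Set X) :
    insert ∞ ((fun x : O => (x : OnePoint O)) '' {x : O | (x : X) ∈ O \ U}) =
      ((fun x : O => (x : OnePoint O)) '' {x : O | (x : X) ∈ U})ᶜ := by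
  ext a
  induction a using OnePoint.rec <;> simp

lemma isOpen_trace {O : Set X} (hO : IsOpen O) {A : Set (OnePoint O)} (hA : IsOpen A) :
    IsOpen (trace O A) :=
  hO.isOpenMap_subtype_val _ (hA.preimage OnePoint.continuous_coe)

lemma isCompact_trace (O : Set X) {A : Set (OnePoint O)} (hA : IsClosed A) (h : ∞ ∉ A) :
    IsCompact (trace O A) :=
  ((OnePoint.isClosed_iff_of_notMem h).1 hA).2.image continuous_subtype_val

lemma isOpen_hat {O U : Set X} (hU : IsOpen U) :
    IsOpen ((fun x : O => (x : OnePoint O)) '' {x : O | (x : X) ∈ U}) :=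
  OnePoint.isOpen_image_coe.2 (hU.preimage continuous_subtype_val)

lemma isCompact_hat {O K : Set X} (hK : IsCompact K) (h : K ⊆ O) :
    IsCompact ((fun x : O => (x : OnePoint O)) '' {x : O | (x : X) ∈ K}) := by
  refine IsCompact.image ?_ OnePoint.continuous_coe
  exact Topology.IsInducing.subtypeVal.isCompact_preimage' hK (by simpa using h)

lemma infty_notMem_hat {X : Type*} (O U : Set X) :
    ∞ ∉ (fun x : O => (x : OnePoint O)) '' {x : O | (x : X) ∈ U} := by
  rintro ⟨x, -, hx⟩; exact OnePoint.coe_ne_infty x hx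

lemma admissible_trace {O : Set X} (hO : IsOpen O) (hOc : IsCompact (closure O))
    {A : Set (OnePoint O)} (hA : IsClosed A ∨ IsOpen A) (h : ∞ ∉ A) :
    trace O A ∈ Admissible X := by
  rcases hA with hA | hA
  · exact Or.inl (isCompact_trace O hA h)
  · exact Or.inr ⟨isOpen_trace hO hA, isCompact_closure_of_subset hOc (trace_subset O A)⟩

/-! ### The induced set function: duality, monotonicity, additivity -/

open scoped Classical in
/-- The set function `τ̂` on the one-point compactification of `O`. The two prescriptions for sets
containing `∞` are both encoded as `τ(O)` minus the measure of the complement; sets that are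
neither closed nor open get the value `0`. -/
def hatFun (τ : TopMeasure X) (O : Set X) (A : Set (OnePoint O)) : ℝ :=
  if IsClosed A ∨ IsOpen A then
    if ∞ ∈ A then τ.toFun O - τ.toFun (trace O Aᶜ) else τ.toFun (trace O A)
  else 0

lemma closed_or_open_compl {Y : Type*} [TopologicalSpace Y] {A : Set Y}
    (hA : IsClosed A ∨ IsOpen A) : IsClosed Aᶜ ∨ IsOpen Aᶜ := by
  rwa [isClosed_compl_iff, isOpen_compl_iff, or_comm]

variable {O : Set X} {A B : Set (OnePoint O)} (τ : TopMeasure X)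

lemma hatFun_of_mem (hA : IsClosed A ∨ IsOpen A) (h : ∞ ∈ A) :
    hatFun τ O A = τ.toFun O - τ.toFun (trace O Aᶜ) := by
  rw [hatFun, if_pos hA, if_pos h]

lemma hatFun_of_notMem (hA : IsClosed A ∨ IsOpen A) (h : ∞ ∉ A) :
    hatFun τ O A = τ.toFun (trace O A) := by
  rw [hatFun, if_pos hA, if_neg h]

lemma hatFun_compl (hA : IsClosed A ∨ IsOpen A) :
    hatFun τ O Aᶜ = τ.toFun O - hatFun τ O A := by
  by_cases h : ∞ ∈ A
  · rw [hatFun_of_mem τ hA h, hatFun_of_notMem τ (closed_or_open_compl hA) (by simpa using h)]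
    ring
  · rw [hatFun_of_notMem τ hA h, hatFun_of_mem τ (closed_or_open_compl hA) (by simpa using h),
      compl_compl]

lemma hatFun_nonneg (hO : IsOpen O) (hOc : IsCompact (closure O)) : 0 ≤ hatFun τ O A := by
  by_cases hA : IsClosed A ∨ IsOpen A
  · by_cases h : ∞ ∈ A
    · rw [hatFun_of_mem τ hA h, sub_nonneg]
      exact τ.mono' _ _
        (admissible_trace hO hOc (closed_or_open_compl hA) (by simpa using h))
        (Or.inr ⟨hO, hOc⟩) (trace_subset _ _)
    · rw [hatFun_of_notMem τ hA h]
      exact τ.nonneg' _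
  · rw [hatFun, if_neg hA]

lemma hatFun_mono [T2Space X] (hO : IsOpen O) (hOc : IsCompact (closure O))
    (hA : IsClosed A ∨ IsOpen A) (hB : IsClosed B ∨ IsOpen B) (hAB : A ⊆ B) :
    hatFun τ O A ≤ hatFun τ O B := by
  have hA' := closed_or_open_compl hA
  have hB' := closed_or_open_compl hB
  by_cases h : ∞ ∈ A
  · rw [hatFun_of_mem τ hA h, hatFun_of_mem τ hB (hAB h)]
    have := τ.mono' _ _ (admissible_trace hO hOc hB' (by simpa using hAB h))
      (admissible_trace hO hOc hA' (by simpa using h)) (trace_mono O (compl_subset_compl.2 hAB))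
    linarith
  by_cases h2 : ∞ ∈ B
  · rw [hatFun_of_notMem τ hA h, hatFun_of_mem τ hB h2]
    have := τ.add_le_of_disjoint hO hOc (admissible_trace hO hOc hA h)
      (admissible_trace hO hOc hB' (by simpa using h2)) (trace_subset _ _) (trace_subset _ _)
      (trace_disjoint O (disjoint_compl_right_iff_subset.2 hAB))
    linarith
  · rw [hatFun_of_notMem τ hA h, hatFun_of_notMem τ hB h2]
    exact τ.mono' _ _ (admissible_trace hO hOc hA h) (admissible_trace hO hOc hB h2)
      (trace_mono O hAB)

/-- Additivity when the second set contains `∞`: on complements it says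
`τ(Bᶜ) = τ(A) + τ((A ∪ B)ᶜ)`. -/
lemma hatFun_add_of_mem (hO : IsOpen O) (hOc : IsCompact (closure O))
    (hA : IsClosed A ∨ IsOpen A) (hB : IsClosed B ∨ IsOpen B)
    (hAB : IsClosed (A ∪ B) ∨ IsOpen (A ∪ B)) (hd : Disjoint A B) (h : ∞ ∈ B) :
    hatFun τ O (A ∪ B) = hatFun τ O A + hatFun τ O B := by
  have h1 : ∞ ∉ A := fun h' => disjoint_left.1 hd h' h
  have h2 : ∞ ∉ (A ∪ B)ᶜ := by simp [h]
  have hBc := admissible_trace hO hOc (closed_or_open_compl hB) (by simpa using h)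
  rw [hatFun_of_mem τ hAB (Or.inr h), hatFun_of_mem τ hB h, hatFun_of_notMem τ hA h1]
  have e : A ∪ (A ∪ B)ᶜ = Bᶜ := by
    ext x
    have : x ∈ A → x ∉ B := fun hx => disjoint_left.1 hd hx
    simp only [mem_union, mem_compl_iff]
    tauto
  have hadd := τ.additive' (trace O A) (trace O (A ∪ B)ᶜ) (admissible_trace hO hOc hA h1)
    (admissible_trace hO hOc (closed_or_open_compl hAB) h2)
    (by rwa [← trace_union, e])
    (trace_disjoint O (disjoint_compl_right_iff_subset.2 subset_union_left))
  rw [← trace_union, e] at hadd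
  linarith

lemma hatFun_add (hO : IsOpen O) (hOc : IsCompact (closure O))
    (hA : IsClosed A ∨ IsOpen A) (hB : IsClosed B ∨ IsOpen B)
    (hAB : IsClosed (A ∪ B) ∨ IsOpen (A ∪ B)) (hd : Disjoint A B) :
    hatFun τ O (A ∪ B) = hatFun τ O A + hatFun τ O B := by
  by_cases h : ∞ ∈ B
  · exact hatFun_add_of_mem τ hO hOc hA hB hAB hd h
  by_cases h' : ∞ ∈ A
  · rw [union_comm] at hAB ⊢
    rw [hatFun_add_of_mem τ hO hOc hB hA hAB hd.symm h', add_comm]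
  have h2 : ∞ ∉ A ∪ B := by simp [h, h']
  have hadm := admissible_trace hO hOc hAB h2
  rw [hatFun_of_notMem τ hAB h2, hatFun_of_notMem τ hA h', hatFun_of_notMem τ hB h]
  rw [trace_union] at hadm ⊢
  exact τ.additive' _ _ (admissible_trace hO hOc hA h') (admissible_trace hO hOc hB h) hadm
    (trace_disjoint O hd)

/-! ### Regularity -/

variable [T2Space X] [LocallyCompactSpace X]

lemma t2Space_onePoint (hO : IsOpen O) : T2Space (OnePoint O) := by
  have := hO.locallyCompactSpace
  infer_instance

lemma mem_admissible_iff (hO : IsOpen O) :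
    A ∈ Admissible (OnePoint O) ↔ IsClosed A ∨ IsOpen A := by
  have := t2Space_onePoint hO
  constructor
  · exact Or.imp IsCompact.isClosed And.left
  · exact Or.imp IsClosed.isCompact fun h => ⟨h, isClosed_closure.isCompact⟩

/-- Outer regularity of `τ̂` at closed sets; together with `hatFun_compl` it also yields inner
regularity at open sets. -/
lemma exists_open_hatFun_lt (hO : IsOpen O) (hOc : IsCompact (closure O)) (hA : IsClosed A)
    {ε : ℝ} (hε : 0 < ε) :
    ∃ V, IsOpen V ∧ A ⊆ V ∧ hatFun τ O V < hatFun τ O A + ε := by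
  have := t2Space_onePoint hO
  by_cases h : ∞ ∈ A
  · obtain ⟨K, hK, hKA, hlt⟩ := τ.exists_compact_gt (isOpen_trace hO hA.isOpen_compl)
      (isCompact_closure_of_subset hOc (trace_subset O Aᶜ)) hε
    have hKO := hKA.trans (trace_subset O Aᶜ)
    have hc := (isCompact_hat hK hKO).isClosed
    refine ⟨_, hc.isOpen_compl, ?_, ?_⟩
    · rw [subset_compl_comm]
      rintro _ ⟨x, hx, rfl⟩
      obtain ⟨y, hy, hyx⟩ := hKA hx
      rw [← Subtype.ext hyx]
      exact hy
    · rw [hatFun_compl τ (Or.inl hc), hatFun_of_notMem τ (Or.inl hc) (infty_notMem_hat O K),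
        trace_image O hKO, hatFun_of_mem τ (Or.inl hA) h]
      linarith
  · have hK := isCompact_trace O hA h
    obtain ⟨W, hW, hWc, hKW, hlt⟩ := τ.exists_open_lt hK hO hOc (trace_subset O A) hε
    have hWO : IsOpen (W ∩ O) := hW.inter hO
    have ho : IsOpen _ := isOpen_hat (O := O) hWO
    refine ⟨_, ho, ?_, ?_⟩
    · intro a ha
      induction a using OnePoint.rec with
      | infty => exact absurd ha h
      | coe x => exact ⟨x, ⟨hKW ⟨x, ha, rfl⟩, x.2⟩, rfl⟩
    · rw [hatFun_of_notMem τ (Or.inr ho) (infty_notMem_hat O _), trace_image O inter_subset_right,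
        hatFun_of_notMem τ (Or.inl hA) h]
      refine lt_of_le_of_lt (τ.mono' _ _ (Or.inr ⟨hWO, ?_⟩) (Or.inr ⟨hW, hWc⟩)
        inter_subset_left) hlt
      exact isCompact_closure_of_subset hOc inter_subset_right

/-- The topological measure `τ̂` on the one-point compactification of `O`. -/
def hatMeasure (hO : IsOpen O) (hOc : IsCompact (closure O)) : TopMeasure (OnePoint O) where
  toFun := hatFun τ O
  zero_of_not_mem' A hA := by
    rw [mem_admissible_iff hO] at hA
    rw [hatFun, if_neg hA]
  nonneg' A := hatFun_nonneg τ hO hOc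
  additive' A B hA hB hAB hd := by
    rw [mem_admissible_iff hO] at hA hB hAB
    exact hatFun_add τ hO hOc hA hB hAB hd
  mono' A B hA hB hAB := by
    rw [mem_admissible_iff hO] at hA hB
    exact hatFun_mono τ hO hOc hA hB hAB
  outer_reg' K hK := by
    have := t2Space_onePoint hO
    refine (csInf_eq_of_forall_ge_of_forall_gt_exists_lt
      (by exact ⟨_, univ, ⟨isOpen_univ, isClosed_closure.isCompact, subset_univ _⟩, rfl⟩) ?_ ?_).symm
    · rintro _ ⟨V, ⟨hV, -, hKV⟩, rfl⟩
      exact hatFun_mono τ hO hOc (Or.inl hK.isClosed) (Or.inr hV) hKV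
    · intro w hw
      obtain ⟨V, hV, hKV, hlt⟩ := exists_open_hatFun_lt τ hO hOc hK.isClosed (sub_pos.2 hw)
      exact ⟨_, ⟨V, ⟨hV, isClosed_closure.isCompact, hKV⟩, rfl⟩, by linarith⟩
  inner_reg' U hU _ := by
    have := t2Space_onePoint hO
    refine (csSup_eq_of_forall_le_of_forall_lt_exists_gt
      (by exact ⟨_, ∅, ⟨isCompact_empty, empty_subset _⟩, rfl⟩) ?_ ?_).symm
    · rintro _ ⟨K, ⟨hK, hKU⟩, rfl⟩
      exact hatFun_mono τ hO hOc (Or.inl hK.isClosed) (Or.inr hU) hKU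
    · intro w hw
      obtain ⟨V, hV, hUV, hlt⟩ :=
        exists_open_hatFun_lt τ hO hOc hU.isClosed_compl (sub_pos.2 hw)
      refine ⟨_, ⟨Vᶜ, ⟨hV.isClosed_compl.isCompact, compl_subset_comm.1 hUV⟩, rfl⟩, ?_⟩
      rw [hatFun_compl τ (Or.inr hU)] at hlt
      rw [hatFun_compl τ (Or.inr hV)]
      linarith

end Hat

open scoped OnePoint in
/-- a topological measure `τ` on `X` induces, for every open `O ⊆ X`
with compact closure, a (well-defined) topological measure `τ̂` on the one-point
compactification `Ô = O ∪ {∞}` of `O`, given by `τ̂(U) = τ(U)` and `τ̂(K) = τ(K)`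
for `U ⊆ O` open and `K ⊆ O` compact, `τ̂((O∖K) ∪ {∞}) = τ(O∖K)` and
`τ̂((O∖U) ∪ {∞}) = τ(O) − τ(U)`. -/
theorem topMeasure_onePoint_compactification {X : Type*} [TopologicalSpace X]
    [T2Space X] [LocallyCompactSpace X] (τ : TopMeasure X) (O : Set X)
    (hO : IsOpen O) (hOc : IsCompact (closure O)) :
    ∃ σ : TopMeasure (OnePoint ↥O),
      (∀ U : Set X, U ⊆ O → IsOpen U →
        σ.toFun ((fun x : ↥O => (x : OnePoint ↥O)) '' {x : ↥O | (x : X) ∈ U}) =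
          τ.toFun U) ∧
      (∀ K : Set X, K ⊆ O → IsCompact K →
        σ.toFun ((fun x : ↥O => (x : OnePoint ↥O)) '' {x : ↥O | (x : X) ∈ K}) =
          τ.toFun K) ∧
      (∀ K : Set X, K ⊆ O → IsCompact K →
        σ.toFun (insert ∞
            ((fun x : ↥O => (x : OnePoint ↥O)) '' {x : ↥O | (x : X) ∈ O \ K})) =
          τ.toFun (O \ K)) ∧
      (∀ U : Set X, U ⊆ O → IsOpen U →
        σ.toFun (insert ∞
            ((fun x : ↥O => (x : OnePoint ↥O)) '' {x : ↥O | (x : X) ∈ O \ U})) =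
          τ.toFun O - τ.toFun U) := by
  have := t2Space_onePoint hO
  have hopen : ∀ U : Set X, U ⊆ O → IsOpen U →
      hatFun τ O ((fun x : ↥O => (x : OnePoint ↥O)) '' {x : ↥O | (x : X) ∈ U}) = τ.toFun U := by
    intro U hUO hU
    rw [hatFun_of_notMem τ (Or.inr (isOpen_hat hU)) (infty_notMem_hat O U), trace_image O hUO]
  have hcomp : ∀ K : Set X, K ⊆ O → IsCompact K →
      hatFun τ O ((fun x : ↥O => (x : OnePoint ↥O)) '' {x : ↥O | (x : X) ∈ K}) = τ.toFun K := by
    intro K hKO hK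
    rw [hatFun_of_notMem τ (Or.inl (isCompact_hat hK hKO).isClosed) (infty_notMem_hat O K),
      trace_image O hKO]
  refine ⟨hatMeasure τ hO hOc, hopen, hcomp, fun K hKO hK => ?_, fun U hUO hU => ?_⟩
  · have hadd := τ.additive' K (O \ K) (Or.inl hK)
      (Or.inr ⟨hO.sdiff hK.isClosed, isCompact_closure_of_subset hOc sdiff_subset⟩)
      (by rw [union_sdiff_cancel hKO]; exact Or.inr ⟨hO, hOc⟩) disjoint_sdiff_right
    rw [union_sdiff_cancel hKO] at hadd
    change hatFun τ O _ = _
    rw [insert_image_diff, hatFun_compl τ (Or.inl (isCompact_hat hK hKO).isClosed),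
      hcomp K hKO hK]
    linarith
  · change hatFun τ O _ = _
    rw [insert_image_diff, hatFun_compl τ (Or.inr (isOpen_hat hU)), hopen U hUO hU]

end
end

section
/- Let X be a locally compact Hausdorff space, ζ a quasi-integral on X, and O ⊆ X an open subset with compact closure. Set λ_O = sup{ζ(g) : g ∈ C_c(X), supp(g) ⊆ O, g ≤ 1}. Then for every g ∈ C_c(X) with supp(g) ⊆ O and with m = min_X g ≤ 0, one has ζ(g) ≥ λ_O · m. -/
/-!
By homogeneity (`QuasiIntegral.map_smul`), `f = m⁻¹ • g` satisfies `ζ f = m⁻¹ * ζ g` when `m < 0`;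
quasi-linearity allows the negative scalar. Since `m ≤ g`, the function `f` is at most `1`, and it
is supported in `O`, so it competes in the supremum `λ_O` and `ζ f ≤ λ_O`; multiplying by `m < 0`
gives the claim. As `λ_O` is a real supremum, this needs it to be taken over a bounded set: every
competitor lies below a Urysohn function equal to `1` on `closure O`, so `ζ` of that function is a
bound (`bddAbove_lambdaO`). When `m = 0`, the claim is positivity of `ζ`.
-/

open Set Topology
open scoped CompactlySupported

noncomputable section

variable {X : Type*} [TopologicalSpace X]

/-- `λ_O = sup {ζ(g) | g ∈ C_c(X), supp g ⊆ O, g ≤ 1}`. -/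
def lambdaO (ζ : QuasiIntegral X) (O : Set X) : ℝ :=
  sSup (ζ.toFun '' {f : C_c(X, ℝ) | tsupport ⇑f ⊆ O ∧ ∀ x, f x ≤ 1})

theorem QuasiIntegral.map_smul {X : Type*} [TopologicalSpace X] (ζ : QuasiIntegral X) (c : ℝ)
    (g : C_c(X, ℝ)) : ζ.toFun (c • g) = c * ζ.toFun g :=
  ζ.quasilin_smul' g id continuous_id rfl c g (c • g) (fun _ => rfl) (fun _ => rfl)

theorem QuasiIntegral.map_zero_s7 {X : Type*} [TopologicalSpace X] (ζ : QuasiIntegral X) :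
    ζ.toFun 0 = 0 := by
  simpa using ζ.map_smul 0 0

theorem bddAbove_lambdaO {X : Type*} [TopologicalSpace X] [T2Space X] [LocallyCompactSpace X]
    (ζ : QuasiIntegral X) (O : Set X) (hOc : IsCompact (closure O)) :
    BddAbove (ζ.toFun '' {f : C_c(X, ℝ) | tsupport ⇑f ⊆ O ∧ ∀ x, f x ≤ 1}) := by
  obtain ⟨u, hu1, -, huc, hu⟩ :=
    exists_continuous_one_zero_of_isCompact hOc isClosed_empty (disjoint_empty _)
  refine ⟨ζ.toFun ⟨u, huc⟩, ?_⟩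
  rintro _ ⟨f, ⟨hfO, hf1⟩, rfl⟩
  refine ζ.mono' _ _ fun x => ?_
  change f x ≤ u x
  by_cases hx : x ∈ closure O
  · rw [hu1 hx]
    exact hf1 x
  · have hfx : f x = 0 := image_eq_zero_of_notMem_tsupport fun h => hx (subset_closure (hfO h))
    rw [hfx]
    exact (hu x).1

/-- if `g ∈ C_c(X)` has support in an open set `O` with compact
closure and `m = min_X g ≤ 0`, then `ζ(g) ≥ λ_O ⋅ m`. -/
theorem quasiIntegral_ge_lambda_mul_min {X : Type*} [TopologicalSpace X]
    [T2Space X] [LocallyCompactSpace X] (ζ : QuasiIntegral X) (O : Set X)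
    (hO : IsOpen O) (hOc : IsCompact (closure O)) (g : C_c(X, ℝ))
    (hg : tsupport ⇑g ⊆ O) (m : ℝ) (hm : IsGLB (Set.range ⇑g) m) (hm0 : m ≤ 0) :
    lambdaO ζ O * m ≤ ζ.toFun g := by
  have hgm : ∀ x, m ≤ g x := fun x => hm.1 (mem_range_self x)
  rcases hm0.eq_or_lt with rfl | hneg
  · rw [mul_zero, ← ζ.map_zero_s7]
    exact ζ.mono' 0 g hgm
  · have hle : ζ.toFun (m⁻¹ • g) ≤ lambdaO ζ O := by
      refine le_csSup (bddAbove_lambdaO ζ O hOc) ⟨m⁻¹ • g, ⟨?_, fun x => ?_⟩, rfl⟩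
      · exact (closure_mono (Function.support_const_smul_subset m⁻¹ ⇑g)).trans hg
      · change m⁻¹ * g x ≤ 1
        rw [← inv_mul_cancel₀ hneg.ne]
        exact mul_le_mul_of_nonpos_left (hgm x) (inv_nonpos.2 hneg.le)
    rw [ζ.map_smul] at hle
    calc lambdaO ζ O * m ≤ m⁻¹ * ζ.toFun g * m := mul_le_mul_of_nonpos_right hle hneg.le
      _ = ζ.toFun g := by field_simp [hneg.ne]

end
end

section
/- Let X be a locally compact Hausdorff space and let τ be a topological measure on X. Then there exists a quasi-integral ζ_τ on X such that for every nonnegative f ∈ C_c(X), ζ_τ(f) = ∫_0^{max f} τ({x ∈ X : f(x) ≥ t}) dt (for each t > 0 the set {f ≥ t} is compact, and the integrand is nonincreasing in t), and such that ζ_τ(f) = ζ_τ(f⁺) − ζ_τ(f⁻) for every f ∈ C_c(X), where f⁺ = max(f,0) and f⁻ = max(−f,0). -/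
/-!
The functional is `ζ(f) = I(f) - I(-f)`, where `I(g) = ∫₀^∞ τ {g ≥ t} dt`; for `t > 0` the set
`{g ≥ t}` only sees the positive part of `g`, so `I(g) = I(g⁺)` for every `g`.  Monotonicity is
monotonicity of `τ`, and the Lipschitz estimate follows from `{f ≥ t + ε} ⊆ {g ≥ t}` whenever
`f ≤ g + ε`, the missing piece of the integral over `(0, ε]` costing at most `ε τ(K)`.

Quasi-linearity rests on the fact that `ζ(φ ∘ f)` is approximated by Riemann sums, which are
linear in `φ`.  Cut `ℝ \ {0}` into small open intervals and their endpoints.  The preimages `A i`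
of these cells under `f` are admissible, and, although `τ` is additive only on admissible unions,
cutting off one cell at a time gives `τ {f ≠ 0} = ∑ i, τ (A i)` exactly (`good_ne`).  Moreover `τ`
is superadditive (`sum_le`): disjoint admissible subsets of `B` have total mass at most `τ B`.
Applied to `{φ ∘ f ≥ t}` this bounds `τ {φ ∘ f ≥ t}` from below by the mass of the cells on which
`φ ∘ f ≥ t`; applied to the complement of that set in `{f ≠ 0}` it bounds it from above by the mass
of the other cells.  Integrating in `t` gives `|ζ(φ ∘ f) - ∑ i, τ (A i) φ (c i)| ≤ 2 ε τ {f ≠ 0}`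
when `φ` oscillates by at most `ε` on the cells.
-/


open Set Topology
open scoped CompactlySupported

noncomputable section

variable {X : Type*} [TopologicalSpace X]

namespace TopMeasure

/-! ### Superadditivity -/

lemma adm_compact {K : Set X} (h : IsCompact K) : K ∈ Admissible X := Or.inl h

lemma adm_open [T2Space X] {O K : Set X} (h : IsOpen O) (hK : IsCompact K) (hO : O ⊆ K) :
    O ∈ Admissible X :=
  Or.inr ⟨h, hK.of_isClosed_subset isClosed_closure (closure_minimal hO hK.isClosed)⟩

lemma empty_eq (τ : TopMeasure X) : τ.toFun ∅ = 0 := by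
  have h := τ.additive' ∅ ∅ (adm_compact isCompact_empty) (adm_compact isCompact_empty)
    (by simpa using adm_compact isCompact_empty) (by simp)
  simp at h
  exact h

lemma compact_sum (τ : TopMeasure X) {ι : Type} (s : Finset ι) (K : ι → Set X)
    (hK : ∀ i, IsCompact (K i)) (hd : Pairwise (Function.onFun Disjoint K)) :
    τ.toFun (⋃ i ∈ s, K i) = ∑ i ∈ s, τ.toFun (K i) := by
  classical
  induction s using Finset.induction_on with
  | empty => simpa using τ.empty_eq
  | insert a s ha ih =>
    rw [Finset.set_biUnion_insert, Finset.sum_insert ha, ← ih]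
    have hc : IsCompact (⋃ i ∈ s, K i) := s.isCompact_biUnion fun i _ => hK i
    refine τ.additive' _ _ (adm_compact (hK a)) (adm_compact hc)
      (adm_compact ((hK a).union hc)) ?_
    simp only [Set.disjoint_iUnion_right]
    intro i hi
    exact hd (fun h => ha (h ▸ hi))

lemma exists_compact (τ : TopMeasure X) {A : Set X} (hA : A ∈ Admissible X) {ε : ℝ}
    (hε : 0 < ε) : ∃ K, IsCompact K ∧ K ⊆ A ∧ τ.toFun A - ε < τ.toFun K := by
  rcases hA with h | ⟨h, h'⟩
  · exact ⟨A, h, Subset.rfl, by linarith⟩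
  · have hne : (τ.toFun '' {K : Set X | IsCompact K ∧ K ⊆ A}).Nonempty :=
      ⟨_, ∅, ⟨isCompact_empty, by simp⟩, rfl⟩
    have hlt : τ.toFun A - ε < sSup (τ.toFun '' {K : Set X | IsCompact K ∧ K ⊆ A}) := by
      rw [← τ.inner_reg' A h h']; linarith
    obtain ⟨_, ⟨K, hK, rfl⟩, hlt⟩ := exists_lt_of_lt_csSup hne hlt
    exact ⟨K, hK.1, hK.2, hlt⟩

/-- Superadditivity: no admissibility of the union is needed, since each piece can be replaced by
a compact subset of almost the same mass. -/
lemma sum_le (τ : TopMeasure X) {ι : Type} (s : Finset ι) (A : ι → Set X) {B : Set X}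
    (hA : ∀ i, A i ∈ Admissible X) (hd : Pairwise (Function.onFun Disjoint A))
    (hB : B ∈ Admissible X) (hAB : ∀ i ∈ s, A i ⊆ B) :
    ∑ i ∈ s, τ.toFun (A i) ≤ τ.toFun B := by
  refine le_of_forall_pos_le_add fun ε hε => ?_
  have hε' : 0 < ε / (s.card + 1) := by positivity
  choose K hK hKA hlt using fun i => τ.exists_compact (hA i) hε'
  have h1 := τ.compact_sum s K hK fun i j hij => (hd hij).mono (hKA i) (hKA j)
  have h2 : τ.toFun (⋃ i ∈ s, K i) ≤ τ.toFun B :=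
    τ.mono' _ _ (adm_compact (s.isCompact_biUnion fun i _ => hK i)) hB
      (Set.iUnion₂_subset fun i hi => (hKA i).trans (hAB i hi))
  have h3 : ∑ i ∈ s, (τ.toFun (A i) - ε / (s.card + 1)) ≤ ∑ i ∈ s, τ.toFun (K i) :=
    Finset.sum_le_sum fun i _ => (hlt i).le
  rw [Finset.sum_sub_distrib, Finset.sum_const, nsmul_eq_mul] at h3
  have h4 : (s.card : ℝ) * (ε / (s.card + 1)) ≤ ε := by
    rw [← mul_div_assoc, div_le_iff₀ (by positivity)]
    nlinarith
  linarith

/-! ### Exact partitions into cells of small oscillation -/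

/-- `Good τ f δ B` says that `B` contains finitely many disjoint admissible sets `A i` whose
masses add up to exactly `τ B`, and on each of which `f` stays within `δ` of a constant `c i`. -/
def Good (τ : TopMeasure X) (f : X → ℝ) (δ : ℝ) (B : Set X) : Prop :=
  ∃ (ι : Type) (_ : Fintype ι) (A : ι → Set X) (c : ι → ℝ),
    (∀ i, A i ∈ Admissible X) ∧ Pairwise (Function.onFun Disjoint A) ∧ (∀ i, A i ⊆ B) ∧
    (∀ i, ∀ x ∈ A i, |f x - c i| ≤ δ) ∧ τ.toFun B = ∑ i, τ.toFun (A i)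

lemma Good.single {τ : TopMeasure X} {f : X → ℝ} {δ : ℝ} {B : Set X} (hB : B ∈ Admissible X)
    (c : ℝ) (h : ∀ x ∈ B, |f x - c| ≤ δ) : Good τ f δ B :=
  ⟨Unit, inferInstance, fun _ => B, fun _ => c, fun _ => hB,
    fun i j hij => absurd (Subsingleton.elim i j) hij, fun _ => Subset.rfl, fun _ => h, by simp⟩

lemma Good.union {τ : TopMeasure X} {f : X → ℝ} {δ : ℝ} {B B' C : Set X}
    (h : Good τ f δ B) (h' : Good τ f δ B') (hB : B ∈ Admissible X) (hB' : B' ∈ Admissible X)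
    (hC : C ∈ Admissible X) (hd : Disjoint B B') (hu : C = B ∪ B') : Good τ f δ C := by
  obtain ⟨ι, _, A, c, h1, h2, h3, h4, h5⟩ := h
  obtain ⟨ι', _, A', c', h1', h2', h3', h4', h5'⟩ := h'
  subst hu
  refine ⟨ι ⊕ ι', inferInstance, Sum.elim A A', Sum.elim c c', ?_, ?_, ?_, ?_, ?_⟩
  · rintro (i | i)
    exacts [h1 i, h1' i]
  · rintro (i | i) (j | j) hij
    · exact h2 (fun h => hij (h ▸ rfl))
    · exact hd.mono (h3 i) (h3' j)
    · exact hd.symm.mono (h3' i) (h3 j)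
    · exact h2' (fun h => hij (h ▸ rfl))
  · rintro (i | i)
    exacts [(h3 i).trans subset_union_left, (h3' i).trans subset_union_right]
  · rintro (i | i)
    exacts [h4 i, h4' i]
  · rw [τ.additive' _ _ hB hB' hC hd, h5, h5', Fintype.sum_sum_type]
    rfl

lemma Good.neg {τ : TopMeasure X} {f : X → ℝ} {δ : ℝ} {B : Set X}
    (h : Good τ (fun x => -f x) δ B) : Good τ f δ B := by
  obtain ⟨ι, i, A, c, h1, h2, h3, h4, h5⟩ := h
  refine ⟨ι, i, A, fun i => -c i, h1, h2, h3, fun i x hx => ?_, h5⟩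
  have := h4 i x hx
  rw [← abs_neg]
  convert this using 2
  ring

lemma isCompact_ge {f : X → ℝ} (hf : Continuous f) (hs : HasCompactSupport f) {t : ℝ}
    (ht : 0 < t) : IsCompact {x | t ≤ f x} := by
  refine hs.isCompact.of_isClosed_subset (isClosed_le continuous_const hf) fun x hx => ?_
  refine subset_tsupport f ?_
  have : t ≤ f x := hx
  exact fun h => by linarith

lemma adm_open_supp [T2Space X] {f : X → ℝ} (hs : HasCompactSupport f) {O : Set X} (hO : IsOpen O)
    (h : ∀ x ∈ O, f x ≠ 0) : O ∈ Admissible X :=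
  adm_open hO hs.isCompact fun x hx => subset_tsupport f (h x hx)

/-- Each step cuts the point `a` and the open interval `(a, a + δ)` off the half-line `[a, ∞)`. -/
lemma good_ge [T2Space X] (τ : TopMeasure X) {f : X → ℝ} (hf : Continuous f) (hs : HasCompactSupport f)
    {δ : ℝ} (hδ : 0 < δ) (n : ℕ) : ∀ a : ℝ, 0 < a → (∀ x, f x < a + n * δ) →
    Good τ f δ {x | a ≤ f x} := by
  induction n with
  | zero =>
    intro a ha h
    refine Good.single (adm_compact (isCompact_ge hf hs ha)) 0 fun x hx => ?_
    have := h x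
    have hx : a ≤ f x := hx
    simp at this
    linarith
  | succ n ih =>
    intro a ha h
    have h1 : Good τ f δ {x | a + δ ≤ f x} := ih (a + δ) (by linarith) fun x => by
      have := h x
      push_cast at this
      linarith
    have a1 := adm_compact (isCompact_ge hf hs (t := a + δ) (by linarith))
    have a2 : {x | a < f x ∧ f x < a + δ} ∈ Admissible X :=
      adm_open_supp hs ((isOpen_lt continuous_const hf).inter (isOpen_lt hf continuous_const))
        fun x hx => by have := hx.1; intro; linarith
    have a3 : {x | a < f x} ∈ Admissible X :=
      adm_open_supp hs (isOpen_lt continuous_const hf)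
        fun x hx => by have : a < f x := hx; intro; linarith
    have a4 : {x | f x = a} ∈ Admissible X := adm_compact <|
      (isCompact_ge hf hs ha).of_isClosed_subset (isClosed_eq hf continuous_const)
        fun x (hx : f x = a) => hx.ge
    have g2 : Good τ f δ {x | a < f x ∧ f x < a + δ} := Good.single a2 a fun x hx => by
      rw [abs_le]; constructor <;> linarith [hx.1, hx.2]
    have g4 : Good τ f δ {x | f x = a} := Good.single a4 a fun x (hx : f x = a) => by
      simp [hx, hδ.le]
    have g3 : Good τ f δ {x | a < f x} := by
      refine g2.union h1 a2 a1 a3 (Set.disjoint_left.2 fun x hx (hx' : a + δ ≤ f x) => ?_) ?_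
      · linarith [hx.2]
      · ext x
        simp only [mem_ofPred_eq, mem_union]
        constructor
        · intro h
          rcases lt_or_ge (f x) (a + δ) with h' | h'
          exacts [Or.inl ⟨h, h'⟩, Or.inr h']
        · rintro (h | h)
          exacts [h.1, by linarith]
    refine g4.union g3 a4 a3 (adm_compact (isCompact_ge hf hs ha))
      (Set.disjoint_left.2 fun x (hx : f x = a) (hx' : a < f x) => hx'.ne' hx) ?_
    ext x
    simp only [mem_ofPred_eq, mem_union, le_iff_eq_or_lt, eq_comm]

lemma good_pos [T2Space X] (τ : TopMeasure X) {f : X → ℝ} (hf : Continuous f) (hs : HasCompactSupport f)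
    {δ : ℝ} (hδ : 0 < δ) : Good τ f δ {x | 0 < f x} := by
  obtain ⟨C, hC⟩ := hs.exists_bound_of_continuous hf
  obtain ⟨n, hn⟩ := exists_nat_gt (C / δ)
  have g1 : Good τ f δ {x | δ ≤ f x} := τ.good_ge hf hs hδ n δ hδ fun x => by
    have h1 := (le_abs_self _).trans (hC x)
    rw [div_lt_iff₀ hδ] at hn
    linarith
  have a2 : {x | 0 < f x ∧ f x < δ} ∈ Admissible X :=
    adm_open_supp hs ((isOpen_lt continuous_const hf).inter (isOpen_lt hf continuous_const))
      fun x hx => hx.1.ne'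
  have a3 : {x | 0 < f x} ∈ Admissible X :=
    adm_open_supp hs (isOpen_lt continuous_const hf) fun x hx => ne_of_gt hx
  have g2 : Good τ f δ {x | 0 < f x ∧ f x < δ} := Good.single a2 0 fun x hx => by
    rw [abs_le]; constructor <;> linarith [hx.1, hx.2]
  refine g2.union g1 a2 (adm_compact (isCompact_ge hf hs hδ)) a3
    (Set.disjoint_left.2 fun x hx (hx' : δ ≤ f x) => ?_) ?_
  · linarith [hx.2]
  · ext x
    simp only [mem_ofPred_eq, mem_union]
    constructor
    · intro h
      rcases lt_or_ge (f x) δ with h' | h'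
      exacts [Or.inl ⟨h, h'⟩, Or.inr h']
    · rintro (h | h)
      exacts [h.1, by linarith]

lemma good_ne [T2Space X] (τ : TopMeasure X) {f : X → ℝ} (hf : Continuous f) (hs : HasCompactSupport f)
    {δ : ℝ} (hδ : 0 < δ) : Good τ f δ {x | f x ≠ 0} := by
  have g1 := τ.good_pos hf hs hδ
  have hs' : HasCompactSupport (fun x => -f x) := hs.comp_left (g := fun y => -y) (by simp)
  have g2 : Good τ f δ {x | 0 < -f x} := (τ.good_pos hf.neg hs' hδ).neg
  refine g1.union g2 (adm_open_supp hs (isOpen_lt continuous_const hf) fun x hx => ne_of_gt hx)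
    (adm_open_supp hs' (isOpen_lt continuous_const hf.neg) fun x hx => ne_of_gt hx)
    (adm_open_supp hs (isOpen_ne_fun hf continuous_const) fun x hx => hx)
    (Set.disjoint_left.2 fun x (hx : 0 < f x) (hx' : 0 < -f x) => ?_) ?_
  · linarith
  · ext x
    simp only [mem_ofPred_eq, mem_union, ne_iff_lt_or_gt, Left.neg_pos_iff, or_comm]

/-! ### The integral of the positive part -/

/-- The integral `∫₀^∞ τ {t ≤ g} dt`; since only `t > 0` enters, it depends only on `g⁺`. -/
def posInt (τ : TopMeasure X) (g : X → ℝ) : ℝ :=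
  ∫ t in Ioi (0 : ℝ), τ.toFun {x | t ≤ g x}

lemma antitoneOn (τ : TopMeasure X) {g : X → ℝ} (hg : Continuous g) (hs : HasCompactSupport g) :
    AntitoneOn (fun t : ℝ => τ.toFun {x | t ≤ g x}) (Ioi 0) := fun _ hs' _ ht hst =>
  τ.mono' _ _ (adm_compact (isCompact_ge hg hs ht)) (adm_compact (isCompact_ge hg hs hs'))
    fun _ hx => hst.trans hx

/-- Intersecting with the support makes the distribution function antitone on all of `ℝ`. -/
lemma intervalIntegrable (τ : TopMeasure X) {g : X → ℝ} (hg : Continuous g)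
    (hs : HasCompactSupport g) {a b : ℝ} (ha : 0 ≤ a) (hb : 0 ≤ b) :
    IntervalIntegrable (fun t : ℝ => τ.toFun {x | t ≤ g x}) MeasureTheory.volume a b := by
  have hc : ∀ t : ℝ, IsCompact (tsupport g ∩ {x | t ≤ g x}) := fun t =>
    hs.isCompact.inter_right (isClosed_le continuous_const hg)
  have hanti : Antitone (fun t : ℝ => τ.toFun (tsupport g ∩ {x | t ≤ g x})) := fun s t hst =>
    τ.mono' _ _ (adm_compact (hc t)) (adm_compact (hc s))
      (inter_subset_inter_right _ fun _ hx => hst.trans hx)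
  refine (hanti.intervalIntegrable (a := a) (b := b)).congr ?_
  intro t ht
  have ht0 : 0 < t := (le_min ha hb).trans_lt ht.1
  show τ.toFun (tsupport g ∩ {x | t ≤ g x}) = τ.toFun {x | t ≤ g x}
  congr 1
  refine inter_eq_right.2 fun x (hx : t ≤ g x) => subset_tsupport g fun h => ?_
  linarith

lemma posInt_eq (τ : TopMeasure X) {g : X → ℝ} {R : ℝ} (hR : 0 ≤ R) (h : ∀ x, g x ≤ R) :
    τ.posInt g = ∫ t in (0 : ℝ)..R, τ.toFun {x | t ≤ g x} := by
  rw [intervalIntegral.integral_of_le hR, posInt]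
  refine MeasureTheory.setIntegral_eq_of_subset_of_forall_sdiff_eq_zero measurableSet_Ioi
    Ioc_subset_Ioi_self fun t ht => ?_
  have hRt : R < t := by
    by_contra! hle
    exact ht.2 ⟨ht.1, hle⟩
  convert τ.empty_eq
  ext x
  simpa using (h x).trans_lt hRt

lemma posInt_congr (τ : TopMeasure X) {g g' : X → ℝ} (h : ∀ x, max (g x) 0 = max (g' x) 0) :
    τ.posInt g = τ.posInt g' := by
  refine MeasureTheory.setIntegral_congr_fun measurableSet_Ioi fun t (ht : 0 < t) => ?_
  show τ.toFun _ = τ.toFun _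
  congr 1
  ext x
  have key : ∀ y : ℝ, t ≤ y ↔ t ≤ max y 0 := fun y => by simp [ht.not_ge]
  simp only [mem_ofPred_eq]
  rw [key, h, ← key]

lemma exists_bound {g : X → ℝ} (hg : Continuous g) (hs : HasCompactSupport g) :
    ∃ R, 0 ≤ R ∧ ∀ x, |g x| ≤ R := by
  obtain ⟨C, hC⟩ := hs.exists_bound_of_continuous hg
  exact ⟨max C 0, le_max_right _ _, fun x => (hC x).trans (le_max_left _ _)⟩

lemma posInt_mono (τ : TopMeasure X) {g g' : X → ℝ} (hg : Continuous g)
    (hs : HasCompactSupport g) (hg' : Continuous g') (hs' : HasCompactSupport g')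
    (h : ∀ x, g x ≤ g' x) : τ.posInt g ≤ τ.posInt g' := by
  obtain ⟨R, hR, hb⟩ := exists_bound hg' hs'
  have hb' : ∀ x, g' x ≤ R := fun x => (le_abs_self _).trans (hb x)
  rw [τ.posInt_eq hR hb', τ.posInt_eq hR fun x => (h x).trans (hb' x)]
  refine intervalIntegral.integral_mono_on_of_le_Ioo hR (τ.intervalIntegrable hg hs le_rfl hR)
    (τ.intervalIntegrable hg' hs' le_rfl hR) fun t ht => ?_
  exact τ.mono' _ _ (adm_compact (isCompact_ge hg hs ht.1))
    (adm_compact (isCompact_ge hg' hs' ht.1)) fun x hx => le_trans hx (h x)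

/-- The integral over `(0, ε]` costs at most `ε τ(K)`; on `(ε, ∞)` the inclusion
`{t ≤ g} ⊆ {t - ε ≤ g'}` applies. -/
lemma posInt_le (τ : TopMeasure X) {g g' : X → ℝ} (hg : Continuous g)
    (hs : HasCompactSupport g) (hg' : Continuous g') (hs' : HasCompactSupport g')
    {K : Set X} (hK : IsCompact K) (hgK : tsupport g ⊆ K) {ε : ℝ} (hε : 0 ≤ ε)
    (h : ∀ x, g x ≤ g' x + ε) : τ.posInt g ≤ τ.posInt g' + τ.toFun K * ε := by
  obtain ⟨R, hR, hb⟩ := exists_bound hg' hs'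
  have hb' : ∀ x, g' x ≤ R := fun x => (le_abs_self _).trans (hb x)
  rw [τ.posInt_eq hR hb', τ.posInt_eq (R := R + ε) (by positivity)
    fun x => (h x).trans (by linarith [hb' x])]
  have hRε : 0 ≤ R + ε := by positivity
  rw [← intervalIntegral.integral_add_adjacent_intervals
    (τ.intervalIntegrable hg hs le_rfl hε) (τ.intervalIntegrable hg hs hε hRε)]
  have h1 : ∫ t in (0 : ℝ)..ε, τ.toFun {x | t ≤ g x} ≤ τ.toFun K * ε := by
    have := intervalIntegral.integral_mono_on_of_le_Ioo hε (τ.intervalIntegrable hg hs le_rfl hε)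
      (intervalIntegrable_const (c := τ.toFun K)) fun t ht =>
        τ.mono' _ _ (adm_compact (isCompact_ge hg hs ht.1)) (adm_compact hK)
          fun x (hx : t ≤ g x) => hgK (subset_tsupport g fun h0 => by linarith [ht.1])
    simpa [mul_comm] using this
  have hsh : IntervalIntegrable (fun t => τ.toFun {x | t - ε ≤ g' x}) MeasureTheory.volume
      ε (R + ε) := by
    have := (τ.intervalIntegrable hg' hs' le_rfl hR).comp_sub_right ε
    simpa using this
  have h2 : ∫ t in ε..(R + ε), τ.toFun {x | t ≤ g x} ≤
      ∫ t in (0 : ℝ)..R, τ.toFun {x | t ≤ g' x} := by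
    have h3 := intervalIntegral.integral_comp_sub_right (a := ε) (b := R + ε)
      (fun t => τ.toFun {x | t ≤ g' x}) ε
    rw [sub_self, add_sub_cancel_right] at h3
    rw [← h3]
    refine intervalIntegral.integral_mono_on_of_le_Ioo (by linarith)
      (τ.intervalIntegrable hg hs hε hRε) hsh fun t ht => ?_
    refine τ.mono' _ _ (adm_compact (isCompact_ge hg hs (hε.trans_lt ht.1)))
      (adm_compact (isCompact_ge hg' hs' (sub_pos.2 ht.1))) fun x (hx : t ≤ g x) => ?_
    show t - ε ≤ g' x
    linarith [h x]
  linarith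

/-! ### Riemann sums -/

/-- The step function `t ↦ 1` for `t ≤ a` is antitone with integral `a⁺`. -/
lemma step_integral {a R : ℝ} (hR : 0 ≤ R) (ha : a ≤ R) :
    IntervalIntegrable (fun t : ℝ => if t ≤ a then (1 : ℝ) else 0) MeasureTheory.volume 0 R ∧
    ∫ t in (0 : ℝ)..R, (if t ≤ a then (1 : ℝ) else 0) = max a 0 := by
  have hanti : Antitone (fun t : ℝ => if t ≤ a then (1 : ℝ) else 0) := fun s t hst => by
    by_cases h : t ≤ a
    · simp [h, hst.trans h]
    · simp only [h, if_false]
      split_ifs <;> norm_num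
  refine ⟨hanti.intervalIntegrable, ?_⟩
  have hm : max a 0 ≤ R := max_le ha hR
  rw [← intervalIntegral.integral_add_adjacent_intervals (b := max a 0)
    hanti.intervalIntegrable hanti.intervalIntegrable]
  have h1 : ∫ t in (0 : ℝ)..(max a 0), (if t ≤ a then (1 : ℝ) else 0) =
      ∫ t in (0 : ℝ)..(max a 0), (1 : ℝ) := by
    refine intervalIntegral.integral_congr_ae (Filter.Eventually.of_forall fun t ht => ?_)
    rw [uIoc_of_le (le_max_right _ _)] at ht
    have : t ≤ a := (le_max_iff.1 ht.2).resolve_right (not_le.2 ht.1)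
    simp [this]
  have h2 : ∫ t in (max a 0)..R, (if t ≤ a then (1 : ℝ) else 0) =
      ∫ t in (max a 0)..R, (0 : ℝ) := by
    refine intervalIntegral.integral_congr_ae (Filter.Eventually.of_forall fun t ht => ?_)
    rw [uIoc_of_le hm] at ht
    have : ¬ t ≤ a := not_le.2 ((le_max_left _ _).trans_lt ht.1)
    simp [this]
  rw [h1, h2]
  simp

/-- The layer-cake formula for a finite sum of step functions. -/
lemma steps_integral {ι : Type} [Fintype ι] (w a : ι → ℝ) {R : ℝ} (hR : 0 ≤ R)
    (ha : ∀ i, a i ≤ R) :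
    IntervalIntegrable (fun t : ℝ => ∑ i, w i * (if t ≤ a i then (1 : ℝ) else 0))
      MeasureTheory.volume 0 R ∧
    ∫ t in (0 : ℝ)..R, ∑ i, w i * (if t ≤ a i then (1 : ℝ) else 0) =
      ∑ i, w i * max (a i) 0 := by
  have hi : ∀ i ∈ Finset.univ, IntervalIntegrable
      (fun t : ℝ => w i * (if t ≤ a i then (1 : ℝ) else 0)) MeasureTheory.volume 0 R :=
    fun i _ => (step_integral hR (ha i)).1.const_mul _
  refine ⟨?_, ?_⟩
  · have := IntervalIntegrable.sum Finset.univ hi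
    have e : (fun t : ℝ => ∑ i, w i * (if t ≤ a i then (1 : ℝ) else 0)) =
        ∑ i, fun t : ℝ => w i * (if t ≤ a i then (1 : ℝ) else 0) := by
      ext t
      simp only [Finset.sum_apply]
    rw [e]
    exact this
  · rw [intervalIntegral.integral_finsetSum hi]
    refine Finset.sum_congr rfl fun i _ => ?_
    rw [intervalIntegral.integral_const_mul, (step_integral hR (ha i)).2]

/-- For `g` vanishing where `f` does and within `ε` of `b i` on each cell `A i` of an exact
partition of `{f ≠ 0}`, the integral of `g⁺` is its Riemann sum up to `ε τ {f ≠ 0}`. -/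
lemma posInt_riemann [T2Space X] (τ : TopMeasure X) {f g : X → ℝ} (hf : Continuous f)
    (hs : HasCompactSupport f) (hg : Continuous g) (hsg : HasCompactSupport g)
    (hfg : ∀ x, f x = 0 → g x = 0) {ι : Type} [Fintype ι] (A : ι → Set X) (b : ι → ℝ)
    (hA : ∀ i, A i ∈ Admissible X) (hd : Pairwise (Function.onFun Disjoint A))
    (hAf : ∀ i, A i ⊆ {x | f x ≠ 0}) {ε : ℝ} (hε : 0 ≤ ε)
    (hb : ∀ i, ∀ x ∈ A i, |g x - b i| ≤ ε)
    (hsum : τ.toFun {x | f x ≠ 0} = ∑ i, τ.toFun (A i)) :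
    |τ.posInt g - ∑ i, τ.toFun (A i) * max (b i) 0| ≤ ε * τ.toFun {x | f x ≠ 0} := by
  classical
  obtain ⟨R₁, hR₁, hgR⟩ := exists_bound hg hsg
  set R := R₁ + ∑ i, |b i| + ε with hRdef
  have hsb : 0 ≤ ∑ i, |b i| := Finset.sum_nonneg fun i _ => abs_nonneg _
  have hR : 0 ≤ R := by positivity
  have hbR : ∀ i, b i + ε ≤ R := fun i => by
    have := Finset.single_le_sum (f := fun i => |b i|) (fun i _ => abs_nonneg _)
      (Finset.mem_univ i)
    have h2 := le_abs_self (b i)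
    linarith
  rw [τ.posInt_eq hR fun x => (le_abs_self _).trans ((hgR x).trans (by linarith))]
  have hw : ∀ i, 0 ≤ τ.toFun (A i) := fun i => τ.nonneg' _
  have hgi := τ.intervalIntegrable hg hsg le_rfl hR
  have filt : ∀ p : ι → Prop, ∀ [DecidablePred p],
      ∑ i, τ.toFun (A i) * (if p i then (1 : ℝ) else 0) =
      ∑ i ∈ Finset.univ.filter p, τ.toFun (A i) := fun p _ => by
    rw [Finset.sum_filter]
    simp
  -- The cells on which `b i - ε ≥ t` lie in `{g ≥ t}`.
  have low := steps_integral (fun i => τ.toFun (A i)) (fun i => b i - ε) hR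
    fun i => by linarith [hbR i]
  have hlow := intervalIntegral.integral_mono_on_of_le_Ioo hR low.1 hgi fun t ht => by
    rw [filt (fun i => t ≤ b i - ε)]
    refine τ.sum_le _ A hA hd (adm_compact (isCompact_ge hg hsg ht.1)) fun i hi x hx => ?_
    have h1 := (Finset.mem_filter.1 hi).2
    have h2 := (abs_le.1 (hb i x hx)).1
    show t ≤ g x
    linarith
  -- The cells on which `b i + ε < t` lie in the complement of `{g ≥ t}` in `{f ≠ 0}`.
  have up := steps_integral (fun i => τ.toFun (A i)) (fun i => b i + ε) hR hbR
  have hup := intervalIntegral.integral_mono_on_of_le_Ioo hR hgi up.1 fun t ht => by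
    rw [filt (fun i => t ≤ b i + ε)]
    have a1 := adm_compact (isCompact_ge hg hsg ht.1)
    have a2 : {x | f x ≠ 0 ∧ g x < t} ∈ Admissible X :=
      adm_open_supp hs ((isOpen_ne_fun hf continuous_const).inter
        (isOpen_lt hg continuous_const)) fun x hx => hx.1
    have hu : {x | f x ≠ 0} = {x | t ≤ g x} ∪ {x | f x ≠ 0 ∧ g x < t} := by
      ext x
      simp only [mem_ofPred_eq, mem_union]
      constructor
      · intro h
        rcases lt_or_ge (g x) t with h' | h'
        exacts [Or.inr ⟨h, h'⟩, Or.inl h']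
      · rintro (h | h)
        · intro h0
          linarith [hfg x h0, ht.1]
        · exact h.1
    have a3 : {x | f x ≠ 0} ∈ Admissible X :=
      adm_open_supp hs (isOpen_ne_fun hf continuous_const) fun x hx => hx
    have h1 := τ.additive' _ _ a1 a2 (hu ▸ a3)
      (Set.disjoint_left.2 fun x (hx : t ≤ g x) hx' => not_lt.2 hx hx'.2)
    rw [← hu, hsum] at h1
    have h2 := τ.sum_le (Finset.univ.filter fun i => ¬ t ≤ b i + ε) A hA hd a2
      fun i hi x hx => ⟨hAf i hx, by
        have h1 := (Finset.mem_filter.1 hi).2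
        have h2 := (abs_le.1 (hb i x hx)).2
        push Not at h1
        linarith⟩
    have h3 := Finset.sum_filter_add_sum_filter_not Finset.univ (fun i => t ≤ b i + ε)
      fun i => τ.toFun (A i)
    linarith
  rw [low.2] at hlow
  rw [up.2] at hup
  have e1 : ∑ i, τ.toFun (A i) * max (b i) 0 - ε * τ.toFun {x | f x ≠ 0} ≤
      ∑ i, τ.toFun (A i) * max (b i - ε) 0 := by
    rw [hsum, Finset.mul_sum, ← Finset.sum_sub_distrib]
    refine Finset.sum_le_sum fun i _ => ?_
    have : max (b i) 0 - ε ≤ max (b i - ε) 0 := by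
      rcases max_cases (b i) 0 with h | h <;> rcases max_cases (b i - ε) 0 with h' | h' <;>
        linarith
    nlinarith [mul_le_mul_of_nonneg_left this (hw i)]
  have e2 : ∑ i, τ.toFun (A i) * max (b i + ε) 0 ≤
      ∑ i, τ.toFun (A i) * max (b i) 0 + ε * τ.toFun {x | f x ≠ 0} := by
    rw [hsum, Finset.mul_sum, ← Finset.sum_add_distrib]
    refine Finset.sum_le_sum fun i _ => ?_
    have : max (b i + ε) 0 ≤ max (b i) 0 + ε := by
      rcases max_cases (b i) 0 with h | h <;> rcases max_cases (b i + ε) 0 with h' | h' <;>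
        linarith
    nlinarith [mul_le_mul_of_nonneg_left this (hw i)]
  rw [abs_le]
  constructor <;> linarith

/-- The functional `ζ(g) = ∫₀^∞ τ {g ≥ t} dt - ∫₀^∞ τ {-g ≥ t} dt`. -/
def zeta (τ : TopMeasure X) (g : X → ℝ) : ℝ := τ.posInt g - τ.posInt fun x => -g x

lemma hcs_neg {g : X → ℝ} (hs : HasCompactSupport g) : HasCompactSupport fun x => -g x :=
  hs.comp_left (g := fun y => -y) (by simp)

/-- Simultaneous Riemann sum approximation of `ζ(φ j ∘ f)` for finitely many `φ j`, with weights
and nodes that do not depend on `j`. -/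
lemma zeta_riemann [T2Space X] (τ : TopMeasure X) {f : X → ℝ} (hf : Continuous f) (hs : HasCompactSupport f)
    {J : Type} [Fintype J] (φ : J → ℝ → ℝ) (hφ : ∀ j, Continuous (φ j)) (hφ0 : ∀ j, φ j 0 = 0)
    {η : ℝ} (hη : 0 < η) :
    ∃ (ι : Type) (_ : Fintype ι) (w c : ι → ℝ),
      ∀ j, |τ.zeta (fun x => φ j (f x)) - ∑ i, w i * φ j (c i)| ≤ η := by
  obtain ⟨M, hM, hfM⟩ := exists_bound hf hs
  set T := τ.toFun {x | f x ≠ 0}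
  have hT : 0 ≤ T := τ.nonneg' _
  set ε := η / (2 * (T + 1)) with hεdef
  have hε : 0 < ε := by positivity
  have huc : ∀ j, ∃ δ > 0, ∀ x ∈ Icc (-(M + 1)) (M + 1), ∀ y ∈ Icc (-(M + 1)) (M + 1),
      |x - y| < δ → |φ j x - φ j y| < ε := fun j => by
    have := isCompact_Icc.uniformContinuousOn_of_continuous
      ((hφ j).continuousOn (s := Icc (-(M + 1)) (M + 1)))
    exact Metric.uniformContinuousOn_iff.1 this ε hε
  choose δ hδ hosc using huc
  obtain ⟨δ₀, hδ₀, hδ₀1, hδ₀δ⟩ : ∃ δ₀ > 0, δ₀ ≤ 1 ∧ ∀ j, δ₀ < δ j := by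
    have hfin : ∀ᶠ d in 𝓝[>] (0 : ℝ), ∀ j, d < δ j :=
      Filter.eventually_all.2 fun j => nhdsWithin_le_nhds (Iio_mem_nhds (hδ j))
    have h1 : ∀ᶠ d in 𝓝[>] (0 : ℝ), d < 1 := nhdsWithin_le_nhds (Iio_mem_nhds one_pos)
    obtain ⟨d, ⟨h2, h3⟩, h4⟩ := ((hfin.and h1).and self_mem_nhdsWithin).exists
    exact ⟨d, h4, h3.le, h2⟩
  obtain ⟨ι, inst, A, c, hA, hd, hAf, hc, hsum⟩ := τ.good_ne hf hs hδ₀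
  refine ⟨ι, inst, fun i => τ.toFun (A i), c, fun j => ?_⟩
  have hcg : Continuous fun x => φ j (f x) := (hφ j).comp hf
  have hsg : HasCompactSupport fun x => φ j (f x) := hs.comp_left (hφ0 j)
  have hcn : Continuous fun x => -φ j (f x) := hcg.neg
  have hb : ∀ i, ∀ x ∈ A i, |φ j (f x) - φ j (c i)| ≤ ε := fun i x hx => by
    have h1 := hc i x hx
    have h2 := abs_le.1 (hfM x)
    have h3 := abs_le.1 h1
    exact (hosc j _ ⟨by linarith, by linarith⟩ _ ⟨by linarith, by linarith⟩
      (h1.trans_lt (hδ₀δ j))).le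
  have p := τ.posInt_riemann hf hs hcg hsg (fun x h => by rw [h, hφ0]) A (fun i => φ j (c i))
    hA hd hAf hε.le hb hsum
  have q := τ.posInt_riemann hf hs hcn (hcs_neg hsg) (fun x h => by simp [h, hφ0]) A
    (fun i => -φ j (c i)) hA hd hAf hε.le (fun i x hx => by
      rw [← abs_neg]
      convert hb i x hx using 2
      ring) hsum
  have e : ∑ i, τ.toFun (A i) * φ j (c i) = ∑ i, τ.toFun (A i) * max (φ j (c i)) 0 -
      ∑ i, τ.toFun (A i) * max (-φ j (c i)) 0 := by
    rw [← Finset.sum_sub_distrib]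
    refine Finset.sum_congr rfl fun i _ => ?_
    rw [← mul_sub]
    congr 1
    rcases max_cases (φ j (c i)) 0 with h | h <;> rcases max_cases (-φ j (c i)) 0 with h' | h' <;>
      linarith
  have hεT : 2 * (ε * T) ≤ η := by
    have : ε * (2 * (T + 1)) = η := div_mul_cancel₀ _ (by positivity)
    nlinarith
  rw [zeta, e]
  rw [abs_le] at p q ⊢
  constructor <;> linarith [p.1, p.2, q.1, q.2]

lemma zeta_add [T2Space X] (τ : TopMeasure X) {f : X → ℝ} (hf : Continuous f) (hs : HasCompactSupport f)
    {φ ψ : ℝ → ℝ} (hφ : Continuous φ) (hψ : Continuous ψ) (hφ0 : φ 0 = 0) (hψ0 : ψ 0 = 0) :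
    τ.zeta (fun x => φ (f x) + ψ (f x)) =
      τ.zeta (fun x => φ (f x)) + τ.zeta (fun x => ψ (f x)) := by
  refine eq_of_abs_sub_le_all fun η hη => ?_
  obtain ⟨ι, _, w, c, h⟩ := τ.zeta_riemann hf hs
    ![φ, ψ, fun y => φ y + ψ y] (by simp [Fin.forall_fin_succ, hφ, hψ, show Continuous fun y => φ y + ψ y from hφ.add hψ])
    (by simp [Fin.forall_fin_succ, hφ0, hψ0]) (η := η / 3) (by positivity)
  have h0 := abs_le.1 (h 0)
  have h1 := abs_le.1 (h 1)
  have h2 := abs_le.1 (h 2)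
  simp only [Matrix.cons_val, mul_add, Finset.sum_add_distrib] at h0 h1 h2
  rw [abs_le]
  constructor <;> linarith [h0.1, h0.2, h1.1, h1.2, h2.1, h2.2]

lemma zeta_smul [T2Space X] (τ : TopMeasure X) {f : X → ℝ} (hf : Continuous f) (hs : HasCompactSupport f)
    {φ : ℝ → ℝ} (hφ : Continuous φ) (hφ0 : φ 0 = 0) (r : ℝ) :
    τ.zeta (fun x => r * φ (f x)) = r * τ.zeta (fun x => φ (f x)) := by
  refine eq_of_abs_sub_le_all fun η hη => ?_
  have hη' : 0 < η / (1 + |r|) := by positivity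
  obtain ⟨ι, _, w, c, h⟩ := τ.zeta_riemann hf hs
    ![φ, fun y => r * φ y] (by simp [Fin.forall_fin_succ, hφ, hφ.const_mul r])
    (by simp [Fin.forall_fin_succ, hφ0]) hη'
  have h0 := h 0
  have h1 := h 1
  simp only [Matrix.cons_val, mul_left_comm _ r, ← Finset.mul_sum] at h0 h1
  set S := ∑ i, w i * φ (c i)
  set Z := τ.zeta fun x => φ (f x)
  calc |τ.zeta (fun x => r * φ (f x)) - r * Z|
      = |(τ.zeta (fun x => r * φ (f x)) - r * S) - r * (Z - S)| := by congr 1; ring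
    _ ≤ |τ.zeta (fun x => r * φ (f x)) - r * S| + |r * (Z - S)| := abs_sub _ _
    _ ≤ η / (1 + |r|) + |r| * (η / (1 + |r|)) := by
        rw [abs_mul]
        gcongr
    _ = η := by field_simp

/-! ### The quasi-integral -/

/-- The quasi-integral induced by `τ`. -/
def quasiIntegral [T2Space X] (τ : TopMeasure X) : QuasiIntegral X where
  toFun f := τ.zeta f
  mono' f g h := by
    have h1 := τ.posInt_mono (map_continuous f) f.hasCompactSupport (map_continuous g) g.hasCompactSupport h
    have h2 : τ.posInt (fun x => -g x) ≤ τ.posInt fun x => -f x :=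
      τ.posInt_mono (map_continuous g).neg (hcs_neg g.hasCompactSupport) (map_continuous f).neg
      (hcs_neg f.hasCompactSupport) fun x => neg_le_neg (h x)
    simp only [zeta]
    linarith
  lipschitz' K hK := by
    refine ⟨2 * τ.toFun K, mul_nonneg zero_le_two (τ.nonneg' _), ?_⟩
    have half : ∀ f g : C_c(X, ℝ), tsupport ⇑f ⊆ K → tsupport ⇑g ⊆ K →
        τ.zeta f - τ.zeta g ≤ 2 * τ.toFun K * ⨆ x, |f x - g x| := by
      intro f g hf hg
      obtain ⟨C, -, hC⟩ := exists_bound (map_continuous f) f.hasCompactSupport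
      obtain ⟨D, -, hD⟩ := exists_bound (map_continuous g) g.hasCompactSupport
      have hbd : BddAbove (range fun x => |f x - g x|) := by
        refine ⟨C + D, ?_⟩
        rintro _ ⟨x, rfl⟩
        exact (abs_sub _ _).trans (add_le_add (hC x) (hD x))
      have hle : ∀ x, |f x - g x| ≤ ⨆ x, |f x - g x| := fun x => le_ciSup hbd x
      have h0 : 0 ≤ ⨆ x, |f x - g x| := Real.iSup_nonneg fun x => abs_nonneg _
      have h1 := τ.posInt_le (map_continuous f) f.hasCompactSupport (map_continuous g) g.hasCompactSupport
        hK hf h0 fun x => by linarith [(abs_le.1 (hle x)).2]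
      have hgn : tsupport (fun x => -g x) ⊆ K := by
        refine (closure_mono fun x hx => ?_).trans hg
        simpa using hx
      have hgc : Continuous fun x => -g x := (map_continuous g).neg
      have hfc : Continuous fun x => -f x := (map_continuous f).neg
      have h2 := τ.posInt_le hgc (hcs_neg g.hasCompactSupport) hfc
        (hcs_neg f.hasCompactSupport) hK hgn h0 fun x => by
          show -g x ≤ -f x + _
          linarith [(abs_le.1 (hle x)).2]
      simp only [zeta]
      linarith
    intro f g hf hg
    have h1 := half f g hf hg
    have h2 := half g f hg hf
    simp only [abs_sub_comm (g _)] at h2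
    rw [abs_le]
    constructor <;> linarith
  quasilin_add' f φ ψ hφ hψ hφ0 hψ0 gφ gψ gs h1 h2 h3 := by
    rw [funext h1, funext h2, funext h3]
    exact τ.zeta_add (map_continuous f) f.hasCompactSupport hφ hψ hφ0 hψ0
  quasilin_smul' f φ hφ hφ0 c gφ gc h1 h2 := by
    rw [funext h1, funext h2]
    exact τ.zeta_smul (map_continuous f) f.hasCompactSupport hφ hφ0 c

end TopMeasure

/-- every topological measure `τ` on `X` gives rise to a
quasi-integral `ζ_τ` with `ζ_τ(f) = ∫₀^{max f} τ({f ≥ t}) dt` for nonnegative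
`f ∈ C_c(X)` (where `{f ≥ t}` is compact for `t > 0` and the integrand is
nonincreasing on `(0, ∞)`), and `ζ_τ(f) = ζ_τ(f⁺) − ζ_τ(f⁻)` in general. -/
theorem topMeasure_gives_quasiIntegral {X : Type*} [TopologicalSpace X]
    [T2Space X] [LocallyCompactSpace X] (τ : TopMeasure X) :
    ∃ ζ : QuasiIntegral X,
      (∀ f : C_c(X, ℝ), (∀ x, 0 ≤ f x) →
        (∀ t : ℝ, 0 < t → IsCompact {x : X | t ≤ f x}) ∧
        AntitoneOn (fun t : ℝ => τ.toFun {x : X | t ≤ f x}) (Set.Ioi 0) ∧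
        ζ.toFun f = ∫ t in (0 : ℝ)..(⨆ x, f x), τ.toFun {x : X | t ≤ f x}) ∧
      (∀ f fp fm : C_c(X, ℝ), (∀ x, fp x = max (f x) 0) →
        (∀ x, fm x = max (-(f x)) 0) → ζ.toFun f = ζ.toFun fp - ζ.toFun fm) := by
  have hneg : ∀ f : X → ℝ, (∀ x, 0 ≤ f x) → τ.posInt (fun x => -f x) = 0 := fun f hf => by
    rw [τ.posInt_eq le_rfl fun x => neg_nonpos.2 (hf x)]
    simp
  refine ⟨τ.quasiIntegral, fun f hf => ⟨fun t ht =>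
    TopMeasure.isCompact_ge (map_continuous f) f.hasCompactSupport ht,
    τ.antitoneOn (map_continuous f) f.hasCompactSupport, ?_⟩, fun f fp fm hp hm => ?_⟩
  · obtain ⟨C, -, hC⟩ := TopMeasure.exists_bound (map_continuous f) f.hasCompactSupport
    have hbd : BddAbove (range f) := by
      refine ⟨C, ?_⟩
      rintro _ ⟨x, rfl⟩
      exact (le_abs_self _).trans (hC x)
    show τ.zeta f = _
    rw [TopMeasure.zeta, hneg f hf, sub_zero]
    exact τ.posInt_eq (Real.iSup_nonneg hf) fun x => le_ciSup hbd x
  · show τ.zeta f = τ.zeta fp - τ.zeta fm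
    have h1 : τ.posInt fp = τ.posInt f := τ.posInt_congr fun x => by simp [hp]
    have h2 : τ.posInt fm = τ.posInt fun x => -f x := τ.posInt_congr fun x => by simp [hm]
    rw [TopMeasure.zeta, TopMeasure.zeta, TopMeasure.zeta, h1, h2,
      hneg fp fun x => by simp [hp], hneg fm fun x => by simp [hm]]
    ring

end
end
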